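/- For an integer A ≥ 2, let δ_{≤A} denote the Hausdorff dimension of C_{{1,…,A}}, the set of irrationals in [0,1] all of whose continued fraction partial quotients are at most A. Then A·(1 − δ_{≤A}) → 6/π² as A → ∞; equivalently, δ_{≤A} = 1 − 6/(π²A) + o(1/A). -/

import Mathlib

open Filter MeasureTheory

/-- The finite continued fraction `[a₁,…,a_k] = 1/(a₁ + 1/(a₂ + ⋯ + 1/a_k))`. -/
def cf : List ℤ → ℚ
  | [] => 0
  | a :: t => 1 / ((a : ℚ) + cf t)

/-- `CA A` is the set of real numbers whose infinite continued fraction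
expansion has all partial quotients in `A`. -/
def CA (A : Set ℤ) : Set ℝ :=
  {x : ℝ | ∃ a : ℕ → ℤ, (∀ n, a n ∈ A) ∧
    Tendsto (fun k : ℕ => ((cf (List.ofFn fun i : Fin k => a i) : ℚ) : ℝ))
      atTop (nhds x)}

open Filter MeasureTheory

noncomputable def Ph : List ℤ → ℝ → ℝ
  | [], x => x
  | a :: t, x => 1 / ((a : ℝ) + Ph t x)

noncomputable def De : List ℤ → ℝ → ℝ
  | [], _ => 1
  | a :: t, x => ((a : ℝ) + Ph t x) * De t x

lemma cf_eq (w : List ℤ) : ((cf w : ℚ) : ℝ) = Ph w 0 := by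
  induction w with
  | nil => simp [cf, Ph]
  | cons a t ih => simp [cf, Ph, ih]

lemma Ph_append (u v : List ℤ) (x : ℝ) : Ph (u ++ v) x = Ph u (Ph v x) := by
  induction u with
  | nil => simp [Ph]
  | cons a t ih => simp [Ph, ih]

def Good (w : List ℤ) : Prop := ∀ a ∈ w, (1 : ℤ) ≤ a

lemma Good.tail {a : ℤ} {t : List ℤ} (h : Good (a :: t)) : Good t :=
  fun b hb => h b (List.mem_cons_of_mem _ hb)

lemma Good.head {a : ℤ} {t : List ℤ} (h : Good (a :: t)) : (1 : ℝ) ≤ a := by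
  exact_mod_cast h a (List.mem_cons_self)

lemma Ph_mem {w : List ℤ} (hw : Good w) {x : ℝ} (hx : x ∈ Set.Icc (0:ℝ) 1) :
    Ph w x ∈ Set.Icc (0:ℝ) 1 := by
  induction w with
  | nil => exact hx
  | cons a t ih =>
    have h1 := ih hw.tail
    have h2 := hw.head
    have h3 : (1:ℝ) ≤ a + Ph t x := by linarith [h1.1]
    refine ⟨by simp only [Ph]; positivity, ?_⟩
    simp only [Ph]
    rw [div_le_one (by linarith)]
    exact h3

lemma De_ge_one {w : List ℤ} (hw : Good w) {x : ℝ} (hx : x ∈ Set.Icc (0:ℝ) 1) :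
    1 ≤ De w x := by
  induction w with
  | nil => simp [De]
  | cons a t ih =>
    have h1 := ih hw.tail
    have h2 := hw.head
    have h3 := (Ph_mem hw.tail hx).1
    simp only [De]
    nlinarith

lemma De_growth {w : List ℤ} (hw : Good w) {x : ℝ} (hx : x ∈ Set.Icc (0:ℝ) 1) :
    (w.length : ℝ) ≤ De w x := by
  induction w with
  | nil => simp [De]
  | cons a t ih =>
    have h1 := ih hw.tail
    have h2 := hw.head
    have h3 := (Ph_mem hw.tail hx).1
    have h4 := De_ge_one hw.tail hx
    rcases t with _ | ⟨b, t⟩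
    · simp only [De, Ph, List.length_cons, List.length_nil] at *
      push_cast
      linarith [hx.1]
    · have h5 : Ph (b :: t) x * De (b :: t) x = De t x := by
        have := hw.tail.head
        have := (Ph_mem hw.tail.tail hx).1
        simp only [Ph, De]
        field_simp
      have h6 := De_ge_one hw.tail.tail hx
      rw [De, List.length_cons, add_mul, h5]
      push_cast
      nlinarith

lemma Ph_sub {w : List ℤ} (hw : Good w) {x y : ℝ} (hx : x ∈ Set.Icc (0:ℝ) 1)
    (hy : y ∈ Set.Icc (0:ℝ) 1) :
    |Ph w x - Ph w y| = |x - y| / (De w x * De w y) := by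
  induction w with
  | nil => simp [Ph, De]
  | cons a t ih =>
    have h1 := ih hw.tail
    have h2 := hw.head
    have h3 := (Ph_mem hw.tail hx).1
    have h4 := (Ph_mem hw.tail hy).1
    have hp : 0 < (a:ℝ) + Ph t x := by linarith
    have hq : 0 < (a:ℝ) + Ph t y := by linarith
    have e1 : Ph (a :: t) x - Ph (a :: t) y
        = (Ph t y - Ph t x) / (((a:ℝ) + Ph t x) * ((a:ℝ) + Ph t y)) := by
      simp only [Ph]
      field_simp
      ring
    have := De_ge_one hw.tail hx
    have := De_ge_one hw.tail hy
    rw [e1, abs_div, abs_sub_comm, h1, abs_of_pos (mul_pos hp hq)]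
    simp only [De]
    field_simp

lemma De_aux {w : List ℤ} (hw : Good w) {x : ℝ} (hx : x ∈ Set.Icc (0:ℝ) 1) :
    (De w 0 ≤ De w x ∧ De w x ≤ De w 1) ∧
    (Ph w 0 * De w 0 ≤ Ph w x * De w x ∧ Ph w x * De w x ≤ Ph w 1 * De w 1) ∧
    De w 1 ≤ 2 * De w 0 ∧
    De w 1 + Ph w 1 * De w 1 ≤ 2 * (De w 0 + Ph w 0 * De w 0) := by
  induction w with
  | nil => simp only [De, Ph]; norm_num; exact hx
  | cons a t ih =>
    obtain ⟨⟨h1, h2⟩, ⟨h3, h4⟩, h5, h6⟩ := ih hw.tail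
    have ha := hw.head
    have e : ∀ y ∈ Set.Icc (0:ℝ) 1, Ph (a :: t) y * De (a :: t) y = De t y := by
      intro y hy
      have := (Ph_mem hw.tail hy).1
      simp only [Ph, De]
      field_simp
    rw [e x hx, e 0 (by simp), e 1 (by simp)]
    simp only [De, add_mul]
    refine ⟨⟨?_, ?_⟩, ⟨h1, h2⟩, ?_, ?_⟩ <;> nlinarith

lemma De_mono {w : List ℤ} (hw : Good w) {x : ℝ} (hx : x ∈ Set.Icc (0:ℝ) 1) :
    De w 0 ≤ De w x := (De_aux hw hx).1.1

lemma De_le {w : List ℤ} (hw : Good w) {x : ℝ} (hx : x ∈ Set.Icc (0:ℝ) 1) :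
    De w x ≤ 2 * De w 0 := (De_aux hw hx).1.2.trans (De_aux hw hx).2.2.1

/-- words of length `n` with letters in `[1,A]` -/
noncomputable def words (A : ℕ) : ℕ → Finset (List ℤ)
  | 0 => {[]}
  | n + 1 => (Finset.Icc (1:ℤ) A ×ˢ words A n).image (fun p => p.1 :: p.2)

lemma sum_words (A n : ℕ) (F : List ℤ → ℝ) :
    ∑ w ∈ words A (n+1), F w = ∑ t ∈ words A n, ∑ a ∈ Finset.Icc (1:ℤ) A, F (a :: t) := by
  rw [words, Finset.sum_image, Finset.sum_product_right]
  rintro ⟨a, t⟩ _ ⟨b, u⟩ _ h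
  simpa using h

lemma mem_words (A n : ℕ) (w : List ℤ) :
    w ∈ words A n ↔ w.length = n ∧ ∀ a ∈ w, 1 ≤ a ∧ a ≤ (A:ℤ) := by
  induction n generalizing w with
  | zero =>
    simp only [words, Finset.mem_singleton, List.length_eq_zero_iff]
    constructor
    · rintro rfl; simp
    · exact fun h => h.1
  | succ n ih =>
    rcases w with _ | ⟨a, t⟩
    · simp [words]
    · simp [words, ih]
      tauto

lemma words_good {A n : ℕ} {w : List ℤ} (h : w ∈ words A n) : Good w :=
  fun a ha => (((mem_words A n w).1 h).2 a ha).1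

open Filter MeasureTheory

lemma ofFn_good {A : ℕ} {a : ℕ → ℤ} (ha : ∀ n, a n ∈ {a : ℤ | 1 ≤ a ∧ a ≤ (A : ℤ)}) (k : ℕ) :
    List.ofFn (fun i : Fin k => a i) ∈ words A k := by
  rw [mem_words]
  refine ⟨by simp, ?_⟩
  intro b hb
  rw [List.mem_ofFn] at hb
  obtain ⟨i, rfl⟩ := hb
  exact ha i

lemma zero_mem01 : (0:ℝ) ∈ Set.Icc (0:ℝ) 1 := by simp

lemma CA_sub {A : ℕ} {x : ℝ} (hx : x ∈ CA {a : ℤ | 1 ≤ a ∧ a ≤ (A : ℤ)}) :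
    x ∈ Set.Icc (0:ℝ) 1 := by
  obtain ⟨a, ha, h⟩ := hx
  refine isClosed_Icc.mem_of_tendsto h (Eventually.of_forall fun k => ?_)
  rw [cf_eq]
  exact Ph_mem (words_good (ofFn_good ha k)) zero_mem01

lemma CA_cons {A : ℕ} {x : ℝ} (hx : x ∈ CA {a : ℤ | 1 ≤ a ∧ a ≤ (A : ℤ)}) {b : ℤ}
    (hb1 : 1 ≤ b) (hb2 : b ≤ A) :
    1 / ((b:ℝ) + x) ∈ CA {a : ℤ | 1 ≤ a ∧ a ≤ (A : ℤ)} := by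
  have hx0 := (CA_sub hx).1
  obtain ⟨a, ha, h⟩ := hx
  refine ⟨fun n => Nat.casesOn n b a, ?_, ?_⟩
  · intro n
    cases n with
    | zero => exact ⟨hb1, hb2⟩
    | succ n => exact ha n
  · rw [← tendsto_add_atTop_iff_nat 1]
    have hb : (1:ℝ) ≤ b := by exact_mod_cast hb1
    have := (h.const_add (b:ℝ)).inv₀ (by linarith)
    rw [one_div]
    refine this.congr fun k => ?_
    rw [List.ofFn_succ]
    simp [cf]

lemma CA_Ph {A : ℕ} {x : ℝ} (hx : x ∈ CA {a : ℤ | 1 ≤ a ∧ a ≤ (A : ℤ)}) {w : List ℤ}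
    (hw : ∀ a ∈ w, 1 ≤ a ∧ a ≤ (A:ℤ)) :
    Ph w x ∈ CA {a : ℤ | 1 ≤ a ∧ a ≤ (A : ℤ)} := by
  induction w with
  | nil => exact hx
  | cons b t ih =>
    have := hw b (by simp)
    exact CA_cons (ih fun a h => hw a (by simp [h])) this.1 this.2

lemma CA_peel {A : ℕ} {x : ℝ} (hx : x ∈ CA {a : ℤ | 1 ≤ a ∧ a ≤ (A : ℤ)}) :
    ∃ b : ℤ, (1 ≤ b ∧ b ≤ A) ∧ ∃ y ∈ CA {a : ℤ | 1 ≤ a ∧ a ≤ (A : ℤ)}, x = 1 / ((b:ℝ) + y) := by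
  obtain ⟨a, ha, h⟩ := hx
  have hb : (1:ℝ) ≤ a 0 := by exact_mod_cast (ha 0).1
  have key : ∀ k : ℕ, ((cf (List.ofFn fun i : Fin (k+1) => a i) : ℚ) : ℝ)
      = 1 / ((a 0 : ℝ) + ((cf (List.ofFn fun i : Fin k => a (i+1)) : ℚ) : ℝ)) := by
    intro k
    rw [List.ofFn_succ]
    simp [cf]
  have ha' : ∀ n, a (n+1) ∈ {a : ℤ | 1 ≤ a ∧ a ≤ (A : ℤ)} := fun n => ha _
  have hm : ∀ k : ℕ, ((cf (List.ofFn fun i : Fin k => a (i+1)) : ℚ) : ℝ) ∈ Set.Icc (0:ℝ) 1 := by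
    intro k
    rw [cf_eq]
    exact Ph_mem (words_good (ofFn_good ha' k)) zero_mem01
  have h' := (tendsto_add_atTop_iff_nat 1).2 h
  have hxpos : 1 / ((a 0 : ℝ) + 1) ≤ x := by
    refine ge_of_tendsto' h' fun k => ?_
    rw [key]
    have := hm k
    apply one_div_le_one_div_of_le <;> linarith [this.1, this.2]
  have hx0 : 0 < x := lt_of_lt_of_le (by positivity) hxpos
  refine ⟨a 0, ha 0, 1 / x - a 0, ⟨fun n => a (n+1), ha', ?_⟩, ?_⟩
  · have := (h'.inv₀ hx0.ne').sub_const (a 0 : ℝ)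
    rw [one_div]
    refine this.congr fun k => ?_
    rw [key]
    simp
  · simp

lemma CA_words {A : ℕ} (n : ℕ) {x : ℝ} (hx : x ∈ CA {a : ℤ | 1 ≤ a ∧ a ≤ (A : ℤ)}) :
    ∃ w ∈ words A n, ∃ y ∈ CA {a : ℤ | 1 ≤ a ∧ a ≤ (A : ℤ)}, x = Ph w y := by
  induction n generalizing x with
  | zero => exact ⟨[], by simp [words], x, hx, rfl⟩
  | succ n ih =>
    obtain ⟨b, hb, y, hy, rfl⟩ := CA_peel hx
    obtain ⟨w, hw, z, hz, rfl⟩ := ih hy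
    refine ⟨b :: w, ?_, z, hz, rfl⟩
    rw [mem_words] at hw ⊢
    simp only [List.length_cons, hw.1, List.mem_cons, true_and]
    rintro c (rfl | hc)
    · exact hb
    · exact hw.2 c hc

lemma CA_lower {A : ℕ} {x : ℝ} (hx : x ∈ CA {a : ℤ | 1 ≤ a ∧ a ≤ (A : ℤ)}) :
    1 / ((A:ℝ) + 1) ≤ x := by
  obtain ⟨b, hb, y, hy, rfl⟩ := CA_peel hx
  have h1 := CA_sub hy
  have : (1:ℝ) ≤ b := by exact_mod_cast hb.1
  have : (b:ℝ) ≤ A := by exact_mod_cast hb.2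
  apply one_div_le_one_div_of_le <;> linarith [h1.1, h1.2]

lemma Ph_close {w : List ℤ} (hw : Good w) (hn : w ≠ []) {x y : ℝ} (hx : x ∈ Set.Icc (0:ℝ) 1)
    (hy : y ∈ Set.Icc (0:ℝ) 1) : |Ph w x - Ph w y| ≤ 1 / w.length := by
  rw [Ph_sub hw hx hy]
  have h0 : (0:ℝ) < w.length := by exact_mod_cast List.length_pos_iff.2 hn
  have h1 : |x - y| ≤ 1 := by rw [abs_le]; constructor <;> linarith [hx.1, hx.2, hy.1, hy.2]
  have h2 := De_growth hw hx
  have h3 := De_ge_one hw hy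
  apply div_le_div₀ (by norm_num) h1 h0
  nlinarith

lemma cf_close {A : ℕ} {a : ℕ → ℤ} (ha : ∀ n, a n ∈ {a : ℤ | 1 ≤ a ∧ a ≤ (A : ℤ)}) {n m : ℕ}
    (hn : 0 < n) (hm : n ≤ m) :
    |((cf (List.ofFn fun i : Fin m => a i) : ℚ) : ℝ)
      - ((cf (List.ofFn fun i : Fin n => a i) : ℚ) : ℝ)| ≤ 1 / n := by
  obtain ⟨k, rfl⟩ := Nat.exists_eq_add_of_le hm
  have e : List.ofFn (fun i : Fin (n + k) => a i)
      = List.ofFn (fun i : Fin n => a i) ++ List.ofFn (fun i : Fin k => a (n + i)) := by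
    rw [List.ofFn_add]; simp
  rw [cf_eq, cf_eq, e, Ph_append]
  have h1 := words_good (ofFn_good ha n)
  have h2 := words_good (ofFn_good (a := fun i => a (n + i)) (fun i => ha _) k)
  have := Ph_close h1 (by rw [← List.length_pos_iff]; simpa using hn) (Ph_mem h2 zero_mem01) zero_mem01
  simpa using this

lemma cf_tendsto {A : ℕ} {a : ℕ → ℤ} (ha : ∀ n, a n ∈ {a : ℤ | 1 ≤ a ∧ a ≤ (A : ℤ)}) :
    ∃ x, Tendsto (fun k : ℕ => ((cf (List.ofFn fun i : Fin k => a i) : ℚ) : ℝ)) atTop (nhds x) := by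
  apply cauchySeq_tendsto_of_complete
  rw [Metric.cauchySeq_iff']
  intro ε hε
  obtain ⟨n, hn⟩ := exists_nat_one_div_lt hε
  refine ⟨n+1, fun m hm => ?_⟩
  rw [Real.dist_eq]
  refine lt_of_le_of_lt (cf_close ha (Nat.succ_pos n) hm) ?_
  push_cast
  exact hn

lemma CA_compact (A : ℕ) : IsCompact (CA {a : ℤ | 1 ≤ a ∧ a ≤ (A : ℤ)}) := by
  let X := ℕ → Set.Icc (1:ℤ) A
  have hX : ∀ a : X, ∀ n, ((a n : ℤ)) ∈ {a : ℤ | 1 ≤ a ∧ a ≤ (A : ℤ)} := fun a n => (a n).2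
  choose π hπ using fun a : X => cf_tendsto (hX a)
  have hc : Continuous π := by
    have hu : TendstoUniformly
        (fun (k : ℕ) (a : X) => ((cf (List.ofFn fun i : Fin k => ((a i : ℤ))) : ℚ) : ℝ)) π atTop := by
      rw [Metric.tendstoUniformly_iff]
      intro ε hε
      obtain ⟨n, hn⟩ := exists_nat_one_div_lt hε
      filter_upwards [eventually_ge_atTop (n+1)] with k hk a
      have : |π a - ((cf (List.ofFn fun i : Fin k => ((a i : ℤ))) : ℚ) : ℝ)| ≤ 1 / k := by
        have h1 := ((hπ a).sub_const
          ((cf (List.ofFn fun i : Fin k => ((a i : ℤ))) : ℚ) : ℝ)).abs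
        refine le_of_tendsto h1 ?_
        filter_upwards [eventually_ge_atTop k] with m hm
        exact cf_close (hX a) (by omega) hm
      rw [Real.dist_eq]
      refine lt_of_le_of_lt (this.trans ?_) hn
      apply one_div_le_one_div_of_le (by positivity)
      exact_mod_cast hk
    refine hu.continuous (Eventually.of_forall fun k => ?_).frequently
    have h1 : Continuous (fun b : Fin k → Set.Icc (1:ℤ) A =>
      ((cf (List.ofFn fun i : Fin k => ((b i : ℤ))) : ℚ) : ℝ)) := continuous_of_discreteTopology
    have h2 : Continuous (fun (a : X) (i : Fin k) => a i) := by fun_prop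
    exact h1.comp h2
  have : CA {a : ℤ | 1 ≤ a ∧ a ≤ (A : ℤ)} = Set.range π := by
    ext x
    constructor
    · rintro ⟨a, ha, h⟩
      refine ⟨fun n => ⟨a n, ha n⟩, ?_⟩
      exact tendsto_nhds_unique (hπ _) h
    · rintro ⟨a, rfl⟩
      exact ⟨fun n => a n, hX a, hπ a⟩
  rw [this]
  exact isCompact_range hc

lemma CA_nonempty {A : ℕ} (hA : 1 ≤ A) : (CA {a : ℤ | 1 ≤ a ∧ a ≤ (A : ℤ)}).Nonempty := by
  have h : ∀ n : ℕ, (fun _ => 1 : ℕ → ℤ) n ∈ {a : ℤ | 1 ≤ a ∧ a ≤ (A : ℤ)} := by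
    intro n; simp; omega
  obtain ⟨x, hx⟩ := cf_tendsto h
  exact ⟨x, _, h, hx⟩

open Filter MeasureTheory

noncomputable def LL (A : ℕ) (s : ℝ) (f : ℝ → ℝ) (x : ℝ) : ℝ :=
  ∑ a ∈ Finset.Icc (1:ℤ) A, ((a:ℝ) + x) ^ (-(2*s)) * f (1 / ((a:ℝ) + x))

lemma iter_upper {A : ℕ} {s : ℝ} {f : ℝ → ℝ}
    (hL : ∀ x ∈ Set.Icc (0:ℝ) 1, LL A s f x ≤ f x) (n : ℕ) {x : ℝ} (hx : x ∈ Set.Icc (0:ℝ) 1) :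
    ∑ w ∈ words A n, De w x ^ (-(2*s)) * f (Ph w x) ≤ f x := by
  induction n with
  | zero => simp [words, De, Ph]
  | succ n ih =>
    rw [sum_words]
    refine le_trans (Finset.sum_le_sum fun t ht => ?_) ih
    have hg := words_good ht
    have h1 := Ph_mem hg hx
    have hD := De_ge_one hg hx
    have h2 := hL _ h1
    calc _ = De t x ^ (-(2*s)) * LL A s f (Ph t x) := by
          rw [LL, Finset.mul_sum]
          refine Finset.sum_congr rfl fun a ha => ?_
          have ha' : (1:ℝ) ≤ a := by exact_mod_cast (Finset.mem_Icc.1 ha).1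
          simp only [De, Ph]
          rw [Real.mul_rpow (by linarith [h1.1]) (by linarith)]
          ring
      _ ≤ _ := by gcongr

lemma ediam_Ph {w : List ℤ} (hw : Good w) :
    Metric.ediam (Ph w '' Set.Icc (0:ℝ) 1) ≤ ENNReal.ofReal (De w 0 ^ (-2:ℝ)) := by
  apply Metric.ediam_le
  rintro _ ⟨x, hx, rfl⟩ _ ⟨y, hy, rfl⟩
  rw [edist_dist, Real.dist_eq, Ph_sub hw hx hy]
  apply ENNReal.ofReal_le_ofReal
  have h1 : |x - y| ≤ 1 := by rw [abs_le]; constructor <;> linarith [hx.1, hx.2, hy.1, hy.2]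
  have h0 := De_ge_one hw zero_mem01
  have h2 := De_mono hw hx
  have h3 := De_mono hw hy
  rw [Real.rpow_neg (by linarith), ← one_div]
  apply div_le_div₀ (by norm_num) h1 (by positivity)
  rw [Real.rpow_two, pow_two]
  gcongr
  linarith

lemma dim_upper {A : ℕ} {s : ℝ} (hs : 0 < s) {f : ℝ → ℝ} {m : ℝ} (hm : 0 < m)
    (hf : ∀ x ∈ Set.Icc (0:ℝ) 1, m ≤ f x)
    (hL : ∀ x ∈ Set.Icc (0:ℝ) 1, LL A s f x ≤ f x) :
    dimH (CA {a : ℤ | 1 ≤ a ∧ a ≤ (A : ℤ)}) ≤ ENNReal.ofReal s := by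
  have hfin : μH[s] (CA {a : ℤ | 1 ≤ a ∧ a ≤ (A : ℤ)}) ≤ ENNReal.ofReal (f 0 / m) := by
    have hr : Tendsto (fun n : ℕ => ENNReal.ofReal (1 / (n:ℝ))) atTop (nhds 0) := by
      rw [← ENNReal.ofReal_zero]
      exact ENNReal.tendsto_ofReal tendsto_one_div_atTop_nhds_zero_nat
    refine (Measure.hausdorffMeasure_le_liminf_sum (ι := fun n => words A n) s _
      (fun n : ℕ => ENNReal.ofReal (1 / (n:ℝ))) hr
      (fun n w => Ph w '' Set.Icc (0:ℝ) 1) ?_ ?_).trans ?_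
    · filter_upwards [eventually_ge_atTop 1] with n hn
      rintro ⟨w, hw⟩
      have hg := words_good hw
      have hl := ((mem_words _ _ _).1 hw).1
      apply Metric.ediam_le
      rintro _ ⟨x, hx, rfl⟩ _ ⟨y, hy, rfl⟩
      rw [edist_dist, Real.dist_eq]
      apply ENNReal.ofReal_le_ofReal
      have := Ph_close hg (by rintro rfl; simp at hl; omega) hx hy
      rwa [hl] at this
    · refine Eventually.of_forall fun n x hx => ?_
      obtain ⟨w, hw, y, hy, rfl⟩ := CA_words n hx
      exact Set.mem_iUnion.2 ⟨⟨w, hw⟩, y, CA_sub hy, rfl⟩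
    · refine (liminf_le_liminf (v := fun _ => ENNReal.ofReal (f 0 / m)) ?_).trans ?_
      · refine Eventually.of_forall fun n => ?_
        have h1 := iter_upper hL n zero_mem01
        have h2 : ∑ w ∈ words A n, De w 0 ^ (-(2*s)) ≤ f 0 / m := by
          rw [le_div_iff₀ hm, Finset.sum_mul]
          refine le_trans (Finset.sum_le_sum fun w hw => ?_) h1
          have hg := words_good hw
          have := De_ge_one hg zero_mem01
          gcongr
          exact hf _ (Ph_mem hg zero_mem01)
        refine le_trans ?_ (ENNReal.ofReal_le_ofReal h2)
        rw [ENNReal.ofReal_sum_of_nonneg, ← Finset.sum_coe_sort (words A n)]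
        · refine Finset.sum_le_sum fun w _ => ?_
          have hg := words_good w.2
          have h0 := De_ge_one hg zero_mem01
          calc _ ≤ (ENNReal.ofReal (De w 0 ^ (-2:ℝ))) ^ s := by
                gcongr
                exact ediam_Ph hg
            _ = _ := by
                rw [ENNReal.ofReal_rpow_of_nonneg (by positivity) hs.le,
                  ← Real.rpow_mul (by linarith)]
                congr 2
                ring
        · intro w hw
          have := De_ge_one (words_good hw) zero_mem01
          positivity
      · simp
  have := dimH_le_of_hausdorffMeasure_ne_top (s := CA {a : ℤ | 1 ≤ a ∧ a ≤ (A : ℤ)})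
    (d := s.toNNReal) (by
      rw [Real.coe_toNNReal s hs.le]
      exact (hfin.trans_lt ENNReal.ofReal_lt_top).ne)
  exact this

open Filter MeasureTheory

noncomputable def Qw (A : ℕ) (s : ℝ) (f : ℝ → ℝ) : List ℤ → ℝ → ℝ
  | [], _ => 1
  | a :: t, x => Qw A s f t x *
      (((a:ℝ) + Ph t x) ^ (-(2*s)) * f (1 / ((a:ℝ) + Ph t x)) / LL A s f (Ph t x))

lemma Qw_append (A : ℕ) (s : ℝ) (f : ℝ → ℝ) (u v : List ℤ) (x : ℝ) :
    Qw A s f (u ++ v) x = Qw A s f v x * Qw A s f u (Ph v x) := by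
  induction u with
  | nil => simp [Qw]
  | cons a t ih => simp only [List.cons_append, Qw, ih, Ph_append]; ring

structure Sup (A : ℕ) (s : ℝ) (f : ℝ → ℝ) (m M : ℝ) : Prop where
  hm : 0 < m
  hs : 0 < s
  hs1 : s ≤ 1
  hA : 1 ≤ A
  h1 : ∀ x ∈ Set.Icc (0:ℝ) 1, m ≤ f x
  h2 : ∀ x ∈ Set.Icc (0:ℝ) 1, f x ≤ M
  hL : ∀ x ∈ Set.Icc (0:ℝ) 1, f x ≤ LL A s f x

section
variable {A : ℕ} {s : ℝ} {f : ℝ → ℝ} {m M : ℝ}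

lemma Qw_sum (h : Sup A s f m M) (n : ℕ) {x : ℝ} (hx : x ∈ Set.Icc (0:ℝ) 1) :
    ∑ w ∈ words A n, Qw A s f w x = 1 := by
  induction n with
  | zero => simp [words, Qw]
  | succ n ih =>
    rw [sum_words, ← ih]
    refine Finset.sum_congr rfl fun t ht => ?_
    have h1 := Ph_mem (words_good ht) hx
    have : LL A s f (Ph t x) ≠ 0 := by linarith [h.hm, h.h1 _ h1, h.hL _ h1]
    simp only [Qw]
    rw [← Finset.mul_sum, ← Finset.sum_div]
    change _ * (LL A s f (Ph t x) / _) = _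
    rw [div_self this, mul_one]

lemma Qw_bound (h : Sup A s f m M) {w : List ℤ} (hw : Good w) {x : ℝ}
    (hx : x ∈ Set.Icc (0:ℝ) 1) :
    0 ≤ Qw A s f w x ∧ Qw A s f w x ≤ De w x ^ (-(2*s)) * f (Ph w x) / f x := by
  have hfx : 0 < f x := h.hm.trans_le (h.h1 x hx)
  induction w with
  | nil => simp [Qw, De, Ph, hfx.ne']
  | cons a t ih =>
    obtain ⟨i1, i2⟩ := ih hw.tail
    have h1 := Ph_mem hw.tail hx
    have h1' := Ph_mem hw hx
    have hft : 0 < f (Ph t x) := h.hm.trans_le (h.h1 _ h1)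
    have hft' : 0 < f (Ph (a::t) x) := h.hm.trans_le (h.h1 _ h1')
    have hLt := h.hL _ h1
    have hD := De_ge_one hw.tail hx
    have ha := hw.head
    have hap : 0 < (a:ℝ) + Ph t x := by linarith [h1.1]
    simp only [Qw, De]
    simp only [Ph] at hft' ⊢
    have hLp : 0 < LL A s f (Ph t x) := hft.trans_le hLt
    refine ⟨by positivity, ?_⟩
    calc _ ≤ (De t x ^ (-(2*s)) * f (Ph t x) / f x) *
        (((a:ℝ) + Ph t x) ^ (-(2*s)) * f (1 / ((a:ℝ) + Ph t x)) / f (Ph t x)) := by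
          gcongr
      _ = _ := by
          rw [Real.mul_rpow hap.le (by linarith)]
          field_simp

lemma Qw_le (h : Sup A s f m M) {w : List ℤ} (hw : Good w) {x : ℝ}
    (hx : x ∈ Set.Icc (0:ℝ) 1) :
    Qw A s f w x ≤ (M / m) * De w 0 ^ (-(2*s)) := by
  refine (Qw_bound h hw hx).2.trans ?_
  have h1 := Ph_mem hw hx
  have hD := De_ge_one hw zero_mem01
  have h3 := h.h1 _ hx
  have h4 := h.h2 _ h1
  have h5 := h.h1 _ h1
  have hm := h.hm
  have hs := h.hs
  have : De w x ^ (-(2*s)) ≤ De w 0 ^ (-(2*s)) :=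
    Real.rpow_le_rpow_of_nonpos (by linarith) (De_mono hw hx) (by linarith)
  have hM : 0 < M := by linarith
  have h6 : 0 ≤ f (Ph w x) := by linarith
  calc _ ≤ De w 0 ^ (-(2*s)) * M / m := by gcongr
    _ = _ := by ring

lemma prefix_mass (h : Sup A s f m M) (n : ℕ) {u : List ℤ} (hu : Good u) {x : ℝ}
    (hx : x ∈ Set.Icc (0:ℝ) 1) :
    ∑ w ∈ (words A n) with u <+: w, Qw A s f w x ≤ (M / m) * De u 0 ^ (-(2*s)) := by
  classical
  have hsub : (words A n).filter (fun w => u <+: w)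
      ⊆ (words A (n - u.length)).image (fun v => u ++ v) := by
    intro w hw
    rw [Finset.mem_filter] at hw
    obtain ⟨hw, v, rfl⟩ := hw
    rw [mem_words] at hw
    refine Finset.mem_image.2 ⟨v, ?_, rfl⟩
    rw [mem_words]
    refine ⟨by simp at hw; omega, fun a ha => hw.2 a (by simp [ha])⟩
  calc _ ≤ ∑ w ∈ (words A (n - u.length)).image (fun v => u ++ v), Qw A s f w x := by
        refine Finset.sum_le_sum_of_subset_of_nonneg hsub ?_
        intro w hw _
        obtain ⟨v, hv, rfl⟩ := Finset.mem_image.1 hw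
        refine (Qw_bound h ?_ hx).1
        intro a ha
        rcases List.mem_append.1 ha with ha | ha
        · exact hu a ha
        · exact words_good hv a ha
    _ = ∑ v ∈ words A (n - u.length), Qw A s f (u ++ v) x := by
        apply Finset.sum_image
        intro v _ v' _ hh
        simpa using hh
    _ ≤ ∑ v ∈ words A (n - u.length), Qw A s f v x * ((M / m) * De u 0 ^ (-(2*s))) := by
        refine Finset.sum_le_sum fun v hv => ?_
        rw [Qw_append]
        have h1 := (Qw_bound h (words_good hv) hx).1
        have h2 := Qw_le h hu (Ph_mem (words_good hv) hx)
        gcongr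
    _ = _ := by rw [← Finset.sum_mul, Qw_sum h _ hx, one_mul]

lemma lcp (n : ℕ) (W : Set (List ℤ)) (hne : W.Nonempty) (hW : ∀ w ∈ W, w.length = n) :
    (∃ w, W = {w}) ∨ ∃ u a b t t', a ≠ b ∧ u ++ a :: t ∈ W ∧ u ++ b :: t' ∈ W ∧
      ∀ w ∈ W, u <+: w := by
  induction n generalizing W with
  | zero =>
    left
    obtain ⟨w, hw⟩ := hne
    refine ⟨w, ?_⟩
    ext v
    constructor
    · intro hv
      have h1 := hW v hv
      have h2 := hW w hw
      rw [List.length_eq_zero_iff] at h1 h2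
      simp [h1, h2]
    · rintro rfl; exact hw
  | succ n ih =>
    obtain ⟨w, hw⟩ := hne
    rcases w with _ | ⟨a, t⟩
    · have := hW _ hw; simp at this
    by_cases hh : ∃ b t', a ≠ b ∧ b :: t' ∈ W
    · obtain ⟨b, t', hab, hb⟩ := hh
      exact Or.inr ⟨[], a, b, t, t', hab, hw, hb, fun w _ => List.nil_prefix⟩
    · push Not at hh
      have hall : ∀ w ∈ W, ∃ t', w = a :: t' := by
        intro w hw
        rcases w with _ | ⟨b, t'⟩
        · have := hW _ hw; simp at this
        · refine ⟨t', ?_⟩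
          by_contra hne
          exact hh b t' (fun e => hne (by rw [e])) hw
      rcases ih {v | a :: v ∈ W} ⟨t, hw⟩ (fun v hv => by
        have := hW _ hv; simpa using this) with ⟨v, hv⟩ | ⟨u, c, d, v, v', h1, h2, h3, h4⟩
      · left
        refine ⟨a :: v, ?_⟩
        ext z
        constructor
        · intro hz
          obtain ⟨t', rfl⟩ := hall z hz
          have : t' ∈ {v | a :: v ∈ W} := hz
          rw [hv] at this
          simp at this
          simp [this]
        · rintro rfl
          have : v ∈ {v | a :: v ∈ W} := by rw [hv]; rfl
          exact this
      · right
        refine ⟨a :: u, c, d, v, v', h1, h2, h3, ?_⟩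
        intro z hz
        obtain ⟨t', rfl⟩ := hall z hz
        have := h4 t' hz
        simpa using this

lemma gap {x y : ℝ} (hx : x ∈ CA {a : ℤ | 1 ≤ a ∧ a ≤ (A : ℤ)})
    (hy : y ∈ CA {a : ℤ | 1 ≤ a ∧ a ≤ (A : ℤ)}) {a b : ℤ} (ha : 1 ≤ a ∧ a ≤ (A:ℤ))
    (hb : 1 ≤ b ∧ b ≤ (A:ℤ)) (hab : a ≠ b) :
    1 / ((A:ℝ) + 1) ^ 3 ≤ |1 / ((a:ℝ) + x) - 1 / ((b:ℝ) + y)| := by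
  wlog hlt : a < b generalizing a b x y
  · rw [abs_sub_comm]
    exact this hy hx hb ha hab.symm (lt_of_le_of_ne (not_lt.1 hlt) hab.symm)
  have hx1 := CA_sub hx
  have hy1 := CA_sub hy
  have hy2 := CA_lower hy
  have h1 : (1:ℝ) ≤ a := by exact_mod_cast ha.1
  have h2 : (b:ℝ) ≤ A := by exact_mod_cast hb.2
  have h3 : (a:ℝ) + 1 ≤ b := by exact_mod_cast hlt
  have hp : 0 < (a:ℝ) + x := by linarith [hx1.1]
  have hq : 0 < (b:ℝ) + y := by linarith [hy1.1]
  have e : 1 / ((a:ℝ) + x) - 1 / ((b:ℝ) + y) = ((b + y) - (a + x)) / ((a + x) * (b + y)) := by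
    field_simp
  rw [e]
  refine le_trans ?_ (le_abs_self _)
  have e2 : 1 / ((A:ℝ) + 1) ^ 3 = (1 / ((A:ℝ) + 1)) / (((A:ℝ) + 1) * ((A:ℝ) + 1)) := by
    field_simp
  rw [e2]
  apply div_le_div₀
  · linarith [hx1.2, hy1.1]
  · linarith [hx1.2]
  · positivity
  · apply mul_le_mul <;> linarith [hx1.2, hy1.2]

open Classical in
lemma mass_U (h : Sup A s f m M) {n : ℕ} (hn : 1 ≤ n) {x : ℝ}
    (hx : x ∈ CA {a : ℤ | 1 ≤ a ∧ a ≤ (A : ℤ)}) (U : Set ℝ) :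
    ENNReal.ofReal (∑ w ∈ (words A n) with Ph w x ∈ U, Qw A s f w x) ≤
      ENNReal.ofReal ((M / m) * (4 * ((A:ℝ)+1)^3) ^ s) * Metric.ediam U ^ s
        + ENNReal.ofReal ((M / m) * (n:ℝ) ^ (-(2*s))) := by
  have hx01 := CA_sub hx
  have hm := h.hm
  have hs := h.hs
  have hM : 0 < M := hm.trans_le ((h.h1 x hx01).trans (h.h2 x hx01))
  set W : Finset (List ℤ) := (words A n).filter (fun w => Ph w x ∈ U) with hWdef
  rcases W.eq_empty_or_nonempty with hW | hW
  · rw [hW]; simp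
  rcases lcp n (W : Set (List ℤ)) hW (fun w hw => by
      rw [hWdef, Finset.mem_coe, Finset.mem_filter] at hw
      exact ((mem_words _ _ _).1 hw.1).1) with ⟨w, hw⟩ | ⟨u, a, b, t, t', hab, h1, h2, h3⟩
  · have hw' : W = {w} := by exact_mod_cast hw
    have hwW : w ∈ W := by simp [hw']
    rw [hw', Finset.sum_singleton]
    refine le_trans ?_ le_add_self
    apply ENNReal.ofReal_le_ofReal
    have hww := (Finset.mem_filter.1 hwW).1
    refine (Qw_le h (words_good hww) hx01).trans ?_
    have hl := ((mem_words _ _ _).1 hww).1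
    have := De_growth (words_good hww) zero_mem01
    rw [hl] at this
    gcongr ?_ * ?_
    exact Real.rpow_le_rpow_of_nonpos (by exact_mod_cast hn) this (by linarith)
  · refine le_trans ?_ le_self_add
    rw [hWdef, Finset.mem_coe, Finset.mem_filter] at h1 h2
    have m1 := ((mem_words _ _ _).1 h1.1).2
    have m2 := ((mem_words _ _ _).1 h2.1).2
    have hu : Good u := fun c hc => (m1 c (by simp [hc])).1
    have ha := m1 a (by simp)
    have hb := m2 b (by simp)
    have c1 : Ph t x ∈ CA {a : ℤ | 1 ≤ a ∧ a ≤ (A : ℤ)} := CA_Ph hx fun c hc => m1 c (by simp [hc])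
    have c2 : Ph t' x ∈ CA {a : ℤ | 1 ≤ a ∧ a ≤ (A : ℤ)} := CA_Ph hx fun c hc => m2 c (by simp [hc])
    have hgap := gap c1 c2 ha hb hab
    have d1 := CA_sub (CA_cons c1 ha.1 ha.2)
    have d2 := CA_sub (CA_cons c2 hb.1 hb.2)
    have hdist := Ph_sub hu d1 d2
    have hD := De_ge_one hu zero_mem01
    have hdd : De u 0 ^ (-2:ℝ) / (4 * ((A:ℝ)+1)^3) ≤ |Ph (u ++ a :: t) x - Ph (u ++ b :: t') x| := by
      rw [Ph_append, Ph_append]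
      simp only [Ph]
      rw [hdist]
      have e1 := De_le hu d1
      have e2 := De_le hu d2
      have g1 := De_ge_one hu d1
      have g2 := De_ge_one hu d2
      rw [Real.rpow_neg (by linarith), Real.rpow_two]
      calc _ = 1 / ((A:ℝ)+1)^3 / ((2 * De u 0) * (2 * De u 0)) := by field_simp; ring
        _ ≤ _ := by gcongr
    have hed : ENNReal.ofReal (De u 0 ^ (-2:ℝ) / (4 * ((A:ℝ)+1)^3)) ≤ Metric.ediam U := by
      refine le_trans (ENNReal.ofReal_le_ofReal hdd) ?_
      rw [← Real.dist_eq, ← edist_dist]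
      exact Metric.edist_le_ediam_of_mem h1.2 h2.2
    calc _ ≤ ENNReal.ofReal ((M / m) * De u 0 ^ (-(2*s))) := by
          apply ENNReal.ofReal_le_ofReal
          refine le_trans ?_ (prefix_mass h n hu hx01)
          refine Finset.sum_le_sum_of_subset_of_nonneg ?_ ?_
          · intro w hw
            rw [Finset.mem_filter]
            exact ⟨(Finset.mem_filter.1 hw).1, h3 w hw⟩
          · intro w hw _
            exact (Qw_bound h (words_good (Finset.mem_filter.1 hw).1) hx01).1
      _ = ENNReal.ofReal ((M / m) * (4 * ((A:ℝ)+1)^3) ^ s) *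
            (ENNReal.ofReal (De u 0 ^ (-2:ℝ) / (4 * ((A:ℝ)+1)^3))) ^ s := by
          rw [ENNReal.ofReal_rpow_of_nonneg (by positivity) hs.le,
            ← ENNReal.ofReal_mul (by positivity)]
          congr 1
          rw [Real.div_rpow (by positivity) (by positivity), ← Real.rpow_mul (by linarith)]
          have : (-2:ℝ) * s = -(2*s) := by ring
          rw [this]
          have : (4 * ((A:ℝ)+1)^3) ^ s ≠ 0 := by positivity
          field_simp
      _ ≤ _ := by gcongr

end

open Filter MeasureTheory

lemma dim_lower {A : ℕ} {s : ℝ} {f : ℝ → ℝ} {m M : ℝ} (h : Sup A s f m M) :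
    ENNReal.ofReal s ≤ dimH (CA {a : ℤ | 1 ≤ a ∧ a ≤ (A : ℤ)}) := by
  classical
  have hs := h.hs
  have hm := h.hm
  obtain ⟨x, hx⟩ := CA_nonempty h.hA
  have hx01 := CA_sub hx
  have hM : 0 < M := hm.trans_le ((h.h1 x hx01).trans (h.h2 x hx01))
  set K : ENNReal := ENNReal.ofReal ((M / m) * (4 * ((A:ℝ)+1)^3) ^ s) with hK
  have hK0 : K ≠ 0 := by rw [hK, ne_eq, ENNReal.ofReal_eq_zero, not_le]; positivity
  have hKt : K ≠ ⊤ := ENNReal.ofReal_ne_top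
  -- finite open covers
  have fin_cover : ∀ (F : Finset ℕ) (U : ℕ → Set ℝ),
      CA {a : ℤ | 1 ≤ a ∧ a ≤ (A : ℤ)} ⊆ ⋃ i ∈ F, U i →
      1 ≤ K * ∑ i ∈ F, Metric.ediam (U i) ^ s := by
    intro F U hcov
    have hn : ∀ n : ℕ, 1 ≤ n → 1 ≤ K * ∑ i ∈ F, Metric.ediam (U i) ^ s
        + F.card * ENNReal.ofReal ((M / m) * (n:ℝ) ^ (-(2*s))) := by
      intro n hn
      have h1 := Qw_sum h n hx01
      have h2 : (1:ℝ) ≤ ∑ i ∈ F, ∑ w ∈ (words A n) with Ph w x ∈ U i, Qw A s f w x := by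
        rw [← h1]
        simp_rw [Finset.sum_filter]
        rw [Finset.sum_comm]
        refine Finset.sum_le_sum fun w hw => ?_
        have hp : Ph w x ∈ CA {a : ℤ | 1 ≤ a ∧ a ≤ (A : ℤ)} := CA_Ph hx ((mem_words _ _ _).1 hw).2
        obtain ⟨i, hi, hU⟩ := Set.mem_iUnion₂.1 (hcov hp)
        have hq := (Qw_bound h (words_good hw) hx01).1
        calc Qw A s f w x = if Ph w x ∈ U i then Qw A s f w x else 0 := by rw [if_pos hU]
          _ ≤ _ := Finset.single_le_sum (f := fun i => if Ph w x ∈ U i then Qw A s f w x else 0)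
              (fun j _ => by split_ifs <;> simp [hq]) hi
      calc (1:ENNReal) = ENNReal.ofReal 1 := by simp
        _ ≤ ENNReal.ofReal (∑ i ∈ F, ∑ w ∈ (words A n) with Ph w x ∈ U i, Qw A s f w x) :=
            ENNReal.ofReal_le_ofReal h2
        _ = ∑ i ∈ F, ENNReal.ofReal (∑ w ∈ (words A n) with Ph w x ∈ U i, Qw A s f w x) := by
            apply ENNReal.ofReal_sum_of_nonneg
            intro i _
            exact Finset.sum_nonneg fun w hw =>
              (Qw_bound h (words_good (Finset.mem_filter.1 hw).1) hx01).1
        _ ≤ ∑ i ∈ F, (K * Metric.ediam (U i) ^ s + ENNReal.ofReal ((M / m) * (n:ℝ) ^ (-(2*s)))) :=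
            Finset.sum_le_sum fun i _ => mass_U h hn hx (U i)
        _ = _ := by
            rw [Finset.sum_add_distrib, Finset.mul_sum, Finset.sum_const, nsmul_eq_mul]
    have ht : Tendsto (fun n : ℕ => K * ∑ i ∈ F, Metric.ediam (U i) ^ s
        + F.card * ENNReal.ofReal ((M / m) * (n:ℝ) ^ (-(2*s)))) atTop
        (nhds (K * ∑ i ∈ F, Metric.ediam (U i) ^ s + F.card * ENNReal.ofReal ((M / m) * 0))) := by
      refine Tendsto.const_add _ (ENNReal.Tendsto.const_mul ?_ (Or.inr (ENNReal.natCast_ne_top _)))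
      apply ENNReal.tendsto_ofReal
      apply Tendsto.const_mul
      exact (tendsto_rpow_neg_atTop (by linarith)).comp tendsto_natCast_atTop_atTop
    simp only [mul_zero, ENNReal.ofReal_zero, add_zero] at ht
    refine ge_of_tendsto ht ?_
    filter_upwards [eventually_ge_atTop 1] with n hn1 using hn n hn1
  have hpos : K⁻¹ ≤ μH[s] (CA {a : ℤ | 1 ≤ a ∧ a ≤ (A : ℤ)}) := by
    rw [Measure.hausdorffMeasure_apply]
    refine le_iSup₂_of_le 1 one_pos ?_
    refine le_iInf fun t => le_iInf fun hcov => le_iInf fun _ => ?_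
    apply le_of_forall_pos_le_add
    intro ε hε
    obtain ⟨δ, hδ0, hδ⟩ := ENNReal.exists_pos_sum_of_countable' hε.ne' ℕ
    have hU : ∀ i, ∃ U : Set ℝ, IsOpen U ∧ t i ⊆ U ∧
        Metric.ediam U ^ s ≤ (⨆ _ : (t i).Nonempty, Metric.ediam (t i) ^ s) + δ i := by
      intro i
      rcases (t i).eq_empty_or_nonempty with he | hne
      · refine ⟨∅, isOpen_empty, by rw [he], ?_⟩
        simp [hs]
      · have hδt : min (δ i) 1 ≠ ⊤ := by simp
        have hδp : 0 < min (δ i) 1 := lt_min (hδ0 i) one_pos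
        set η : ℝ := (min (δ i) 1).toReal ^ (1/s) / 2 with hη
        have hr0 : 0 < (min (δ i) 1).toReal := ENNReal.toReal_pos hδp.ne' hδt
        have hη0 : 0 < η := by positivity
        refine ⟨Metric.thickening η (t i), Metric.isOpen_thickening,
          Metric.self_subset_thickening hη0 _, ?_⟩
        have h1 : Metric.ediam (Metric.thickening η (t i)) ≤ Metric.ediam (t i) + 2 * ENNReal.ofReal η := by
          have := Metric.ediam_thickening_le (s := t i) η.toNNReal
          rwa [Real.coe_toNNReal _ hη0.le] at this
        have h2 : (2 * ENNReal.ofReal η) ^ s ≤ δ i := by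
          have e : 2 * ENNReal.ofReal η = ENNReal.ofReal (2 * η) := by
            rw [ENNReal.ofReal_mul (by norm_num)]; simp
          rw [e, ENNReal.ofReal_rpow_of_pos (by positivity)]
          have e2 : (2 * η) ^ s = (min (δ i) 1).toReal := by
            rw [hη, mul_div_cancel₀ _ (by norm_num), ← Real.rpow_mul hr0.le,
              one_div_mul_cancel hs.ne', Real.rpow_one]
          rw [e2, ENNReal.ofReal_toReal hδt]
          exact min_le_left _ _
        calc _ ≤ (Metric.ediam (t i) + 2 * ENNReal.ofReal η) ^ s := by gcongr
          _ ≤ Metric.ediam (t i) ^ s + (2 * ENNReal.ofReal η) ^ s :=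
              ENNReal.rpow_add_le_add_rpow _ _ hs.le h.hs1
          _ ≤ _ := by
              gcongr
              exact le_iSup (fun _ : (t i).Nonempty => Metric.ediam (t i) ^ s) hne
    choose U hUo hUt hUd using hU
    obtain ⟨F, hF⟩ := (CA_compact A).elim_finite_subcover U hUo
      (hcov.trans (Set.iUnion_mono hUt))
    have h1 := fin_cover F U hF
    have h2 : ∑ i ∈ F, Metric.ediam (U i) ^ s
        ≤ (∑' n, ⨆ _ : (t n).Nonempty, Metric.ediam (t n) ^ s) + ε := by
      calc _ ≤ ∑ i ∈ F, ((⨆ _ : (t i).Nonempty, Metric.ediam (t i) ^ s) + δ i) :=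
            Finset.sum_le_sum fun i _ => hUd i
        _ ≤ ∑' i, ((⨆ _ : (t i).Nonempty, Metric.ediam (t i) ^ s) + δ i) := ENNReal.sum_le_tsum _
        _ = (∑' n, ⨆ _ : (t n).Nonempty, Metric.ediam (t n) ^ s) + ∑' i, δ i := ENNReal.tsum_add
        _ ≤ _ := by gcongr
    refine le_trans ?_ h2
    rw [ENNReal.inv_le_iff_le_mul (fun _ => hK0) (fun e => absurd e hKt)]
    exact h1
  have := le_dimH_of_hausdorffMeasure_ne_zero (s := CA {a : ℤ | 1 ≤ a ∧ a ≤ (A : ℤ)})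
    (d := s.toNNReal) (by
      rw [Real.coe_toNNReal s hs.le]
      exact ((ENNReal.inv_pos.2 hKt).trans_le hpos).ne')
  exact this

open Filter MeasureTheory

noncomputable def tt (i : ℕ) (x : ℝ) : ℝ := (1 + x) / ((i:ℝ) + 1 + x)
noncomputable def pp (i : ℕ) (x : ℝ) : ℝ := (1 + x) / (((i:ℝ) + 1 + x) * ((i:ℝ) + 2 + x))
noncomputable def Wt (B : ℕ) (c : ℕ → ℝ) (x : ℝ) : ℝ :=
  c 0 + ∑ i ∈ Finset.range B, tt (i+1) x * (c (i+1) - c i)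

lemma tt_nonneg (i : ℕ) {x : ℝ} (hx : x ∈ Set.Icc (0:ℝ) 1) : 0 ≤ tt i x := by
  have := hx.1
  unfold tt; positivity

lemma pp_nonneg (i : ℕ) {x : ℝ} (hx : x ∈ Set.Icc (0:ℝ) 1) : 0 ≤ pp i x := by
  have := hx.1
  unfold pp; positivity

lemma pp_eq (i : ℕ) {x : ℝ} (hx : x ∈ Set.Icc (0:ℝ) 1) : pp i x = tt i x - tt (i+1) x := by
  have := hx.1
  unfold pp tt
  push_cast
  have h1 : (i:ℝ) + 1 + x ≠ 0 := by positivity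
  have h2 : (i:ℝ) + 1 + 1 + x ≠ 0 := by positivity
  have h3 : (i:ℝ) + 2 + x ≠ 0 := by positivity
  field_simp
  ring

lemma Wt_eq (B : ℕ) (c : ℕ → ℝ) {x : ℝ} (hx : x ∈ Set.Icc (0:ℝ) 1) :
    Wt B c x = ∑ i ∈ Finset.range (B+1), pp i x * c i + tt (B+1) x * c B := by
  induction B with
  | zero =>
    have h0 : tt 0 x = 1 := by
      have := hx.1
      unfold tt
      push_cast
      rw [zero_add, div_self (by positivity)]
    simp [Wt, pp_eq 0 hx, h0]
    ring
  | succ B ih =>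
    have : Wt (B+1) c x = Wt B c x + tt (B+1) x * (c (B+1) - c B) := by
      simp only [Wt, Finset.sum_range_succ]; ring
    rw [this, ih, Finset.sum_range_succ _ (B+1), pp_eq (B+1) hx]
    ring

lemma Wt_const (B : ℕ) (k x : ℝ) : Wt B (fun _ => k) x = k := by simp [Wt]

lemma Wt_mono (B : ℕ) {c d : ℕ → ℝ} (h : ∀ i, c i ≤ d i) {x : ℝ} (hx : x ∈ Set.Icc (0:ℝ) 1) :
    Wt B c x ≤ Wt B d x := by
  rw [Wt_eq B c hx, Wt_eq B d hx]
  have := tt_nonneg (B+1) hx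
  have h1 := h B
  gcongr with i
  · exact pp_nonneg i hx
  · exact h i

lemma Wt_abs (B : ℕ) {c d : ℕ → ℝ} (h : ∀ i, |c i| ≤ d i) {x : ℝ} (hx : x ∈ Set.Icc (0:ℝ) 1) :
    |Wt B c x| ≤ Wt B d x := by
  rw [abs_le]
  constructor
  · have : - Wt B d x = Wt B (fun i => - d i) x := by
      simp only [Wt, neg_add, ← Finset.sum_neg_distrib]
      congr 1
      refine Finset.sum_congr rfl fun i _ => by ring
    rw [this]
    exact Wt_mono B (fun i => (abs_le.1 (h i)).1) hx
  · exact Wt_mono B (fun i => (abs_le.1 (h i)).2) hx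

lemma Wt_add (B : ℕ) (c d : ℕ → ℝ) (x : ℝ) :
    Wt B (fun i => c i + d i) x = Wt B c x + Wt B d x := by
  simp only [Wt]
  rw [add_add_add_comm, ← Finset.sum_add_distrib]
  congr 1
  refine Finset.sum_congr rfl fun i _ => by ring

lemma Wt_sub_le (B : ℕ) (γ : ℕ → ℝ → ℝ) {x y : ℝ} (hx : x ∈ Set.Icc (0:ℝ) 1)
    (hy : y ∈ Set.Icc (0:ℝ) 1) {d e : ℕ → ℝ}
    (hd : ∀ i, |γ (i+1) y - γ i y| ≤ d i / ((i:ℝ) + 1))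
    (he : ∀ i, |γ i x - γ i y| ≤ e i) :
    |Wt B (fun i => γ i x) x - Wt B (fun i => γ i y) y|
      ≤ |x - y| * ∑ i ∈ Finset.range B, d i / ((i:ℝ)+2)^2 + Wt B e x := by
  have e1 : Wt B (fun i => γ i x) x - Wt B (fun i => γ i y) y
      = ∑ i ∈ Finset.range B, (tt (i+1) x - tt (i+1) y) * (γ (i+1) y - γ i y)
        + Wt B (fun i => γ i x - γ i y) x := by
    simp only [Wt]
    have : ∑ i ∈ Finset.range B, tt (i+1) x * (γ (i+1) x - γ i x)
       - ∑ i ∈ Finset.range B, tt (i+1) y * (γ (i+1) y - γ i y)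
       = ∑ i ∈ Finset.range B, (tt (i+1) x - tt (i+1) y) * (γ (i+1) y - γ i y)
        + ∑ i ∈ Finset.range B, tt (i+1) x * (γ (i+1) x - γ (i+1) y - (γ i x - γ i y)) := by
      rw [← Finset.sum_sub_distrib, ← Finset.sum_add_distrib]
      refine Finset.sum_congr rfl fun i _ => by ring
    linarith
  rw [e1]
  refine (abs_add_le _ _).trans (add_le_add ?_ (Wt_abs B he hx))
  refine (Finset.abs_sum_le_sum_abs _ _).trans ?_
  rw [Finset.mul_sum]
  refine Finset.sum_le_sum fun i _ => ?_
  have hx0 := hx.1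
  have hy0 := hy.1
  have e2 : tt (i+1) x - tt (i+1) y
      = ((i:ℝ)+1) * (x - y) / (((i:ℝ)+2+x) * ((i:ℝ)+2+y)) := by
    unfold tt
    push_cast
    have h1 : (i:ℝ) + 1 + 1 + x ≠ 0 := by positivity
    have h2 : (i:ℝ) + 1 + 1 + y ≠ 0 := by positivity
    have h3 : (i:ℝ) + 2 + x ≠ 0 := by positivity
    have h4 : (i:ℝ) + 2 + y ≠ 0 := by positivity
    field_simp
    ring
  have e3 : |tt (i+1) x - tt (i+1) y| ≤ ((i:ℝ)+1) * |x - y| / ((i:ℝ)+2)^2 := by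
    rw [e2, abs_div, abs_mul, abs_of_pos (by positivity : (0:ℝ) < (i:ℝ)+1),
      abs_of_pos (by positivity : (0:ℝ) < ((i:ℝ)+2+x) * ((i:ℝ)+2+y)), pow_two]
    gcongr _ / (?_ * ?_) <;> linarith
  rw [abs_mul]
  have hdi : 0 ≤ d i / ((i:ℝ)+1) := (abs_nonneg _).trans (hd i)
  calc _ ≤ (((i:ℝ)+1) * |x - y| / ((i:ℝ)+2)^2) * (d i / ((i:ℝ)+1)) := by
        gcongr
        exact hd i
    _ = _ := by field_simp

lemma sum_cube (B : ℕ) : ∑ i ∈ Finset.range B, (1 / ((i:ℝ)+2)) / ((i:ℝ)+2)^2 ≤ 1/4 := by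
  have : ∑ i ∈ Finset.range B, (1 / ((i:ℝ)+2)) / ((i:ℝ)+2)^2
      ≤ 1/4 - 1 / (2 * ((B:ℝ)+1) * ((B:ℝ)+2)) := by
    induction B with
    | zero => norm_num
    | succ B ih =>
      rw [Finset.sum_range_succ]
      have : (1 / ((B:ℝ)+2)) / ((B:ℝ)+2)^2 ≤ 1 / (2 * ((B:ℝ)+1) * ((B:ℝ)+2))
          - 1 / (2 * ((B:ℝ)+1+1) * ((B:ℝ)+1+2)) := by
        have e : 1 / (2 * ((B:ℝ)+1) * ((B:ℝ)+2)) - 1 / (2 * ((B:ℝ)+1+1) * ((B:ℝ)+1+2))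
          = 1 / (((B:ℝ)+1) * ((B:ℝ)+2) * ((B:ℝ)+3)) := by
          have h1 : (B:ℝ)+1+1 ≠ 0 := by positivity
          have h2 : (B:ℝ)+1+2 ≠ 0 := by positivity
          field_simp
          ring
        rw [e, div_div]
        apply one_div_le_one_div_of_le (by positivity)
        have : (0:ℝ) ≤ B := by positivity
        nlinarith
      push_cast
      linarith
  have h2 : 0 ≤ 1 / (2 * ((B:ℝ)+1) * ((B:ℝ)+2)) := by positivity
  linarith

lemma sum_sq (B : ℕ) : ∑ i ∈ Finset.range B, (1:ℝ) / ((i:ℝ)+2)^2 ≤ 1 := by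
  have : ∑ i ∈ Finset.range B, (1:ℝ) / ((i:ℝ)+2)^2 ≤ 1 - 1 / ((B:ℝ)+1) := by
    induction B with
    | zero => norm_num
    | succ B ih =>
      rw [Finset.sum_range_succ]
      have : (1:ℝ) / ((B:ℝ)+2)^2 ≤ 1 / ((B:ℝ)+1) - 1 / ((B:ℝ)+1+1) := by
        have e : 1 / ((B:ℝ)+1) - 1 / ((B:ℝ)+1+1) = 1 / (((B:ℝ)+1) * ((B:ℝ)+2)) := by
          have h1 : (B:ℝ)+1+1 ≠ 0 := by positivity
          field_simp
          ring
        rw [e]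
        apply one_div_le_one_div_of_le (by positivity)
        have : (0:ℝ) ≤ B := by positivity
        nlinarith
      push_cast
      linarith
  have h2 : 0 ≤ 1 / ((B:ℝ)+1) := by positivity
  linarith

lemma sum_tel (B : ℕ) : ∑ i ∈ Finset.range B, (2:ℝ) / ((i:ℝ)+2) * (1 / ((i:ℝ)+1)) ≤ 2 := by
  have : ∑ i ∈ Finset.range B, (2:ℝ) / ((i:ℝ)+2) * (1 / ((i:ℝ)+1)) = 2 - 2 / ((B:ℝ)+1) := by
    induction B with
    | zero => norm_num
    | succ B ih =>
      rw [Finset.sum_range_succ, ih]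
      push_cast
      have h1 : (B:ℝ)+1+1 ≠ 0 := by positivity
      field_simp
      ring
  have h2 : 0 ≤ 2 / ((B:ℝ)+1) := by positivity
  linarith

noncomputable def ph (i : ℕ) (x : ℝ) : ℝ := 1 / ((i:ℝ) + 1 + x)

lemma ph_mem (i : ℕ) {x : ℝ} (hx : x ∈ Set.Icc (0:ℝ) 1) : ph i x ∈ Set.Icc (0:ℝ) 1 := by
  have := hx.1
  have hi : (0:ℝ) ≤ i := by positivity
  unfold ph
  refine ⟨by positivity, ?_⟩
  rw [div_le_one (by positivity)]
  linarith

noncomputable def MM (B : ℕ) (g : ℝ → ℝ) (x : ℝ) : ℝ := Wt B (fun i => g (ph i x)) x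

def LipK (K : ℝ) (g : ℝ → ℝ) : Prop :=
  ∀ x ∈ Set.Icc (0:ℝ) 1, ∀ y ∈ Set.Icc (0:ℝ) 1, |g x - g y| ≤ K * |x - y|

lemma MM_contr {B : ℕ} (hB : 1 ≤ B) {K : ℝ} (hK : 0 ≤ K) {g : ℝ → ℝ} (hg : LipK K g) :
    LipK (7/8 * K) (MM B g) := by
  intro x hx y hy
  have hx0 := hx.1
  have hy0 := hy.1
  have key := Wt_sub_le B (fun i x => g (ph i x)) hx hy
    (d := fun i => K * (1 / ((i:ℝ)+2)))
    (e := fun i => if i = 0 then K * |x - y| else K * |x - y| / 4) ?_ ?_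
  · refine key.trans ?_
    have h1 : ∑ i ∈ Finset.range B, K * (1 / ((i:ℝ)+2)) / ((i:ℝ)+2)^2 ≤ K * (1/4) := by
      simp_rw [mul_div_assoc, ← Finset.mul_sum]
      have := sum_cube B
      gcongr
    have h2 : Wt B (fun i => if i = 0 then K * |x - y| else K * |x - y| / 4) x
        ≤ 5/8 * (K * |x - y|) := by
      obtain ⟨B, rfl⟩ := Nat.exists_eq_add_of_le' hB
      simp only [Wt]
      rw [Finset.sum_range_succ']
      simp only [Nat.add_eq_zero_iff, one_ne_zero, and_false, if_false, if_true, sub_self, mul_zero,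
        Finset.sum_const_zero, zero_add]
      have ht : 1/2 ≤ tt 1 x := by
        unfold tt
        push_cast
        rw [le_div_iff₀ (by positivity)]
        linarith
      have : 0 ≤ K * |x - y| := by positivity
      nlinarith
    have := mul_le_mul_of_nonneg_left h1 (abs_nonneg (x - y))
    linarith
  · intro i
    have h1 := hg _ (ph_mem (i+1) hy) _ (ph_mem i hy)
    refine h1.trans ?_
    have e : ph (i+1) y - ph i y = - (1 / (((i:ℝ)+2+y) * ((i:ℝ)+1+y))) := by
      unfold ph
      push_cast
      have h1 : (i:ℝ) + 1 + 1 + y ≠ 0 := by positivity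
      have h2 : (i:ℝ) + 2 + y ≠ 0 := by positivity
      field_simp
      ring
    rw [e, abs_neg, abs_of_pos (by positivity), mul_div_assoc, div_div]
    gcongr K * (1 / (?_ * ?_)) <;> linarith
  · intro i
    have h1 := hg _ (ph_mem i hx) _ (ph_mem i hy)
    refine h1.trans ?_
    have e : |ph i x - ph i y| = |x - y| / (((i:ℝ)+1+x) * ((i:ℝ)+1+y)) := by
      have : ph i x - ph i y = (y - x) / (((i:ℝ)+1+x) * ((i:ℝ)+1+y)) := by
        unfold ph
        have h1 : (i:ℝ) + 1 + x ≠ 0 := by positivity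
        have h2 : (i:ℝ) + 1 + y ≠ 0 := by positivity
        field_simp
        ring
      rw [this, abs_div, abs_sub_comm, abs_of_pos (by positivity : (0:ℝ) < ((i:ℝ)+1+x) * ((i:ℝ)+1+y))]
    rw [e]
    split_ifs with hi
    · gcongr
      apply div_le_self (abs_nonneg _)
      subst hi
      push_cast
      nlinarith
    · rw [mul_div_assoc]
      have hi1 : (1:ℝ) ≤ i := by exact_mod_cast Nat.one_le_iff_ne_zero.2 hi
      gcongr
      nlinarith

noncomputable def ML (B : ℕ) (x : ℝ) : ℝ := Wt B (fun i => Real.log ((i:ℝ) + 1 + x)) x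

lemma log_diff {a b : ℝ} (ha : 0 < a) (hab : a ≤ b) :
    0 ≤ Real.log b - Real.log a ∧ Real.log b - Real.log a ≤ (b - a) / a := by
  have hb : 0 < b := ha.trans_le hab
  refine ⟨sub_nonneg.2 (Real.log_le_log ha hab), ?_⟩
  rw [← Real.log_div hb.ne' ha.ne']
  refine (Real.log_le_sub_one_of_pos (by positivity)).trans (le_of_eq ?_)
  field_simp

lemma log_lip (i : ℕ) {x y : ℝ} (hx : x ∈ Set.Icc (0:ℝ) 1) (hy : y ∈ Set.Icc (0:ℝ) 1) :
    |Real.log ((i:ℝ) + 1 + x) - Real.log ((i:ℝ) + 1 + y)| ≤ |x - y| := by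
  wlog h : y ≤ x generalizing x y
  · rw [abs_sub_comm, abs_sub_comm x y]
    exact this hy hx (le_of_not_ge h)
  have hy0 := hy.1
  have h1 := log_diff (a := (i:ℝ) + 1 + y) (b := (i:ℝ) + 1 + x) (by positivity) (by linarith)
  rw [abs_of_nonneg h1.1, abs_of_nonneg (by linarith)]
  refine h1.2.trans ?_
  have hi : (0:ℝ) ≤ i := by positivity
  have : ((i:ℝ) + 1 + x - ((i:ℝ) + 1 + y)) = x - y := by ring
  rw [this]
  exact div_le_self (by linarith) (by linarith)

lemma ML_lip (B : ℕ) : LipK 2 (ML B) := by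
  intro x hx y hy
  have hy0 := hy.1
  have key := Wt_sub_le B (fun i x => Real.log ((i:ℝ) + 1 + x)) hx hy
    (d := fun i => 1) (e := fun i => |x - y|) ?_ ?_
  · refine key.trans ?_
    rw [Wt_const]
    have := mul_le_mul_of_nonneg_left (sum_sq B) (abs_nonneg (x - y))
    linarith
  · intro i
    have h1 := log_diff (a := (i:ℝ) + 1 + y) (b := ((i+1:ℕ):ℝ) + 1 + y) (by positivity)
      (by push_cast; linarith)
    rw [abs_of_nonneg h1.1]
    refine h1.2.trans ?_
    have : (((i+1:ℕ):ℝ) + 1 + y - ((i:ℝ) + 1 + y)) = 1 := by push_cast; ring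
    rw [this]
    apply one_div_le_one_div_of_le (by positivity)
    linarith
  · intro i
    exact log_lip i hx hy

lemma ML_bound (B : ℕ) {x : ℝ} (hx : x ∈ Set.Icc (0:ℝ) 1) : |ML B x| ≤ 3 := by
  have hx0 := hx.1
  have hd : ∀ i : ℕ, 0 ≤ Real.log (((i+1:ℕ):ℝ) + 1 + x) - Real.log ((i:ℝ) + 1 + x) ∧
      Real.log (((i+1:ℕ):ℝ) + 1 + x) - Real.log ((i:ℝ) + 1 + x) ≤ 1 / ((i:ℝ) + 1) := by
    intro i
    have h1 := log_diff (a := (i:ℝ) + 1 + x) (b := ((i+1:ℕ):ℝ) + 1 + x) (by positivity)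
      (by push_cast; linarith)
    refine ⟨h1.1, h1.2.trans ?_⟩
    have : (((i+1:ℕ):ℝ) + 1 + x - ((i:ℝ) + 1 + x)) = 1 := by push_cast; ring
    rw [this]
    apply one_div_le_one_div_of_le (by positivity)
    linarith
  have h0 : 0 ≤ Real.log (((0:ℕ):ℝ) + 1 + x) ∧ Real.log (((0:ℕ):ℝ) + 1 + x) ≤ 1 := by
    push_cast
    refine ⟨Real.log_nonneg (by linarith), ?_⟩
    have := Real.log_le_sub_one_of_pos (x := 0 + 1 + x) (by linarith)
    linarith [hx.2]
  unfold ML Wt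
  have hs0 : 0 ≤ ∑ i ∈ Finset.range B, tt (i+1) x *
      (Real.log (((i+1:ℕ):ℝ) + 1 + x) - Real.log ((i:ℝ) + 1 + x)) :=
    Finset.sum_nonneg fun i _ => mul_nonneg (tt_nonneg _ hx) (hd i).1
  have hs1 : ∑ i ∈ Finset.range B, tt (i+1) x *
      (Real.log (((i+1:ℕ):ℝ) + 1 + x) - Real.log ((i:ℝ) + 1 + x)) ≤ 2 := by
    refine le_trans (Finset.sum_le_sum fun i _ => ?_) (sum_tel B)
    have := hd i
    have ht : tt (i+1) x ≤ 2 / ((i:ℝ)+2) := by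
      unfold tt
      push_cast
      apply div_le_div₀ <;> first | positivity | linarith [hx.2]
    gcongr
    · exact this.1
    · exact this.2
  rw [abs_of_nonneg (by linarith)]
  linarith

open Filter MeasureTheory

lemma int_pow_log (n : ℕ) : IntervalIntegrable (fun y : ℝ => y ^ n * (-Real.log y)) volume 0 1 := by
  have h := (intervalIntegral.intervalIntegrable_log' (a := 0) (b := 1)).neg
  exact h.continuousOn_mul (by fun_prop)

lemma integral_pow_log (n : ℕ) : ∫ y in (0:ℝ)..1, y ^ n * (-Real.log y) = 1 / ((n:ℝ)+1)^2 := by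
  have hn : (n:ℝ) + 1 ≠ 0 := by positivity
  have := intervalIntegral.integral_eq_sub_of_hasDerivAt_of_le (a := 0) (b := 1) (by norm_num)
    (f := fun y : ℝ => y ^ (n+1) / ((n:ℝ)+1)^2 - y ^ n * (y * Real.log y) / ((n:ℝ)+1))
    (f' := fun y : ℝ => y ^ n * (-Real.log y)) ?_ ?_ (int_pow_log n)
  · rw [this]
    simp
  · have := Real.continuous_mul_log
    fun_prop
  · intro y hy
    have hy0 : y ≠ 0 := hy.1.ne'
    have e : (fun y : ℝ => y ^ (n+1) / ((n:ℝ)+1)^2 - y ^ n * (y * Real.log y) / ((n:ℝ)+1))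
        = fun y : ℝ => y ^ (n+1) / ((n:ℝ)+1)^2 - y ^ (n+1) * Real.log y / ((n:ℝ)+1) := by
      funext y; ring
    rw [e]
    have h1 := hasDerivAt_pow (n+1) y
    have h2 := Real.hasDerivAt_log hy0
    refine ((h1.div_const (((n:ℝ)+1)^2)).sub ((h1.mul h2).div_const ((n:ℝ)+1))).congr_deriv ?_
    push_cast
    field_simp
    ring

lemma int_log : IntervalIntegrable (fun y : ℝ => -Real.log y / (1 + y)) volume 0 1 := by
  have h := (intervalIntegral.intervalIntegrable_log' (a := 0) (b := 1)).neg
  have : ContinuousOn (fun y : ℝ => (1 + y)⁻¹) (Set.uIcc 0 1) := by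
    rw [Set.uIcc_of_le (by norm_num)]
    refine ContinuousOn.inv₀ (by fun_prop) ?_
    intro y hy
    linarith [hy.1]
  exact h.mul_continuousOn this

lemma alt_sum : HasSum (fun n : ℕ => (-1:ℝ)^n / ((n:ℝ)+1)^2) (Real.pi^2/12) := by
  have h1 := hasSum_zeta_two
  have h2 : HasSum (fun n : ℕ => if Even n then 2 * (1 / (n:ℝ)^2) else 0) (Real.pi^2/12) := by
    have hinj : Function.Injective (fun n : ℕ => 2 * n) := fun a b h => by simpa using h
    rw [← hinj.hasSum_iff]
    · have := h1.mul_left (1/2)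
      have e : ((fun n : ℕ => if Even n then 2 * (1 / (n:ℝ)^2) else 0) ∘ fun n : ℕ => 2 * n)
          = fun n : ℕ => 1 / 2 * (1 / (n:ℝ)^2) := by
        funext n
        simp only [Function.comp, even_two_mul, if_true]
        push_cast
        rw [mul_pow]
        rcases eq_or_ne (n:ℝ) 0 with h | h
        · simp [h]
        · field_simp
      have e2 : 1 / 2 * (Real.pi^2/6) = Real.pi^2/12 := by ring
      rw [e2] at this
      rw [e]
      exact this
    · intro n hn
      rw [if_neg]
      rintro ⟨k, hk⟩
      exact hn ⟨k, by simp; omega⟩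
  have h3 := h1.sub h2
  have h4 := (hasSum_nat_add_iff' 1).2 h3
  have e : (fun n : ℕ => (-1:ℝ)^n / ((n:ℝ)+1)^2) = fun n : ℕ => 1 / (((n+1:ℕ):ℝ))^2
      - (if Even (n+1) then 2 * (1 / (((n+1:ℕ)):ℝ)^2) else 0) := by
    funext n
    push_cast
    rcases Nat.even_or_odd n with he | ho
    · rw [if_neg (by simpa [Nat.even_add_one] using he), he.neg_one_pow]
      ring
    · rw [if_pos (by simpa [Nat.even_add_one] using ho), ho.neg_one_pow]
      ring
  rw [e]
  have e2 : Real.pi ^ 2 / 6 - Real.pi ^ 2 / 12 - ∑ i ∈ Finset.range 1, (1 / (i:ℝ)^2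
      - (if Even i then 2 * (1 / (i:ℝ)^2) else 0)) = Real.pi^2/12 := by
    simp
    ring
  rw [e2] at h4
  exact h4

lemma integral_log_div : ∫ y in (0:ℝ)..1, -Real.log y / (1 + y) = Real.pi^2/12 := by
  have key : ∀ N : ℕ, |∫ y in (0:ℝ)..1, -Real.log y / (1 + y)
      - ∑ n ∈ Finset.range N, (-1:ℝ)^n * (y ^ n * (-Real.log y))| ≤ 1 / ((N:ℝ)+1)^2 := by
    intro N
    rw [← integral_pow_log N, ← Real.norm_eq_abs]
    apply intervalIntegral.norm_integral_le_of_norm_le (by norm_num) _ (int_pow_log N)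
    refine Eventually.of_forall fun y hy => ?_
    have hy0 : 0 < y := hy.1
    have hl : 0 ≤ -Real.log y := by
      have := Real.log_nonpos hy0.le hy.2; linarith
    have hg : ∑ n ∈ Finset.range N, (-1:ℝ)^n * (y ^ n * (-Real.log y))
        = (-Real.log y) * ((1 - (-y)^N) / (1 + y)) := by
      have : ∑ n ∈ Finset.range N, (-1:ℝ)^n * (y ^ n * (-Real.log y))
          = (-Real.log y) * ∑ n ∈ Finset.range N, (-y)^n := by
        rw [Finset.mul_sum]
        refine Finset.sum_congr rfl fun n _ => ?_
        rw [neg_pow y]; ring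
      rw [this, geom_sum_eq (by linarith)]
      congr 1
      rw [div_eq_div_iff (by linarith) (by linarith)]
      ring
    have e : -Real.log y / (1 + y) - (-Real.log y) * ((1 - (-y)^N) / (1 + y))
        = (-y)^N * (-Real.log y) / (1 + y) := by
      field_simp
      ring
    rw [hg, e, Real.norm_eq_abs, abs_div, abs_mul, abs_pow, abs_neg, abs_of_pos hy0,
      abs_of_nonneg hl, abs_of_pos (by linarith : 0 < 1 + y)]
    apply div_le_self (by positivity)
    linarith
  have key2 : ∀ N : ℕ, |(∫ y in (0:ℝ)..1, -Real.log y / (1 + y))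
      - ∑ n ∈ Finset.range N, (-1:ℝ)^n / ((n:ℝ)+1)^2| ≤ 1 / ((N:ℝ)+1)^2 := by
    intro N
    refine le_trans (le_of_eq ?_) (key N)
    rw [intervalIntegral.integral_sub int_log, intervalIntegral.integral_finsetSum]
    · simp_rw [intervalIntegral.integral_const_mul, integral_pow_log, mul_one_div]
    · intro n _
      exact (int_pow_log n).const_mul _
    · have := IntervalIntegrable.sum (μ := volume) (a := (0:ℝ)) (b := 1) (Finset.range N)
        (f := fun n y => (-1:ℝ)^n * (y ^ n * (-Real.log y)))
        (fun n _ => (int_pow_log n).const_mul _)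
      have e : (∑ n ∈ Finset.range N, fun y : ℝ => (-1:ℝ)^n * (y ^ n * (-Real.log y)))
          = fun y : ℝ => ∑ n ∈ Finset.range N, (-1:ℝ)^n * (y ^ n * (-Real.log y)) := by
        funext y
        rw [Finset.sum_apply]
      rw [← e]
      exact this
  have h1 := alt_sum.tendsto_sum_nat
  have h2 : Tendsto (fun N : ℕ => 1 / ((N:ℝ)+1)^2) atTop (nhds 0) := by
    have := (tendsto_one_div_add_atTop_nhds_zero_nat (𝕜 := ℝ)).pow 2
    simpa using this
  have h3 : Tendsto (fun N : ℕ => ∑ n ∈ Finset.range N, (-1:ℝ)^n / ((n:ℝ)+1)^2) atTop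
      (nhds (∫ y in (0:ℝ)..1, -Real.log y / (1 + y))) := by
    rw [tendsto_iff_norm_sub_tendsto_zero]
    refine squeeze_zero (fun _ => norm_nonneg _) (fun N => ?_) h2
    rw [Real.norm_eq_abs, abs_sub_comm]
    exact key2 N
  exact tendsto_nhds_unique h3 h1

lemma tendsto_log_int : Tendsto (fun N : ℕ => ∫ y in (1 / ((N:ℝ)+1))..1, -Real.log y / (1 + y))
    atTop (nhds (Real.pi^2/12)) := by
  have h : IntegrableOn (fun y : ℝ => -Real.log y / (1 + y)) (Set.uIcc 0 1) := by
    rw [Set.uIcc_of_le (by norm_num), integrableOn_Icc_iff_integrableOn_Ioc]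
    exact (intervalIntegrable_iff_integrableOn_Ioc_of_le (by norm_num)).1 int_log
  have hc := intervalIntegral.continuousOn_primitive_interval_left h
  have h0 := hc 0 (by simp)
  rw [ContinuousWithinAt, integral_log_div] at h0
  refine h0.comp ?_
  refine tendsto_nhdsWithin_iff.2 ⟨tendsto_one_div_add_atTop_nhds_zero_nat, ?_⟩
  refine Eventually.of_forall fun N => ?_
  rw [Set.uIcc_of_le (by norm_num)]
  refine ⟨by positivity, ?_⟩
  rw [div_le_one (by positivity)]
  have : (0:ℝ) ≤ N := by positivity
  linarith

open Filter MeasureTheory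

noncomputable def JJ (g : ℝ → ℝ) : ℝ := ∫ x in (0:ℝ)..1, g x / (1 + x)

lemma u01 : Set.uIcc (0:ℝ) 1 = Set.Icc 0 1 := Set.uIcc_of_le (by norm_num)

lemma ph_cont (i : ℕ) : ContinuousOn (ph i) (Set.Icc (0:ℝ) 1) := by
  unfold ph
  refine ContinuousOn.div (by fun_prop) (by fun_prop) ?_
  intro x hx
  have := hx.1
  positivity

lemma pp_cont (i : ℕ) : ContinuousOn (pp i) (Set.Icc (0:ℝ) 1) := by
  unfold pp
  refine ContinuousOn.div (by fun_prop) (by fun_prop) ?_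
  intro x hx
  have := hx.1
  positivity

lemma ph_memIoc (i : ℕ) {x : ℝ} (hx : x ∈ Set.Icc (0:ℝ) 1) : ph i x ∈ Set.Ioc (0:ℝ) 1 := by
  refine ⟨?_, (ph_mem i hx).2⟩
  have := hx.1
  unfold ph
  positivity

lemma cont_pp (i : ℕ) {g : ℝ → ℝ} (hg : ContinuousOn g (Set.Ioc 0 1)) :
    ContinuousOn (fun x => pp i x * g (ph i x) / (1 + x)) (Set.Icc (0:ℝ) 1) := by
  have h1 : ContinuousOn (fun x => g (ph i x)) (Set.Icc (0:ℝ) 1) :=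
    hg.comp (ph_cont i) (fun x hx => ph_memIoc i hx)
  refine ContinuousOn.div ((pp_cont i).mul h1) (by fun_prop) ?_
  intro x hx
  have := hx.1
  positivity

lemma cov (i : ℕ) {g : ℝ → ℝ} (hg : ContinuousOn g (Set.Ioc 0 1)) :
    ∫ x in (0:ℝ)..1, pp i x * g (ph i x) / (1 + x)
      = ∫ y in (1 / ((i:ℝ)+2))..(1 / ((i:ℝ)+1)), g y / (1 + y) := by
  have h := intervalIntegral.integral_comp_mul_deriv' (a := 0) (b := 1) (f := ph i)
    (f' := fun x => - (1 / ((i:ℝ)+1+x)^2)) (g := fun y => g y / (1 + y)) ?_ ?_ ?_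
  · have e0 : ph i 0 = 1 / ((i:ℝ)+1) := by simp [ph]
    have e1 : ph i 1 = 1 / ((i:ℝ)+2) := by
      unfold ph; congr 1; ring
    rw [e0, e1] at h
    rw [intervalIntegral.integral_symm (1 / ((i:ℝ)+1)), ← h, ← intervalIntegral.integral_neg]
    refine intervalIntegral.integral_congr fun x hx => ?_
    rw [u01] at hx
    have hx0 := hx.1
    have a1 : (i:ℝ) + 1 + x ≠ 0 := by positivity
    have a2 : (i:ℝ) + 2 + x ≠ 0 := by positivity
    have a3 : 1 + x ≠ 0 := by positivity
    have a4 : 1 + ph i x = ((i:ℝ) + 2 + x) / ((i:ℝ) + 1 + x) := by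
      unfold ph; field_simp; ring
    simp only [Function.comp, a4, pp]
    field_simp
  · intro x hx
    rw [u01] at hx
    have hx0 := hx.1
    have a1 : (i:ℝ) + 1 + x ≠ 0 := by positivity
    have := ((hasDerivAt_id x).const_add ((i:ℝ)+1)).inv a1
    have e : ph i = fun x => ((i:ℝ) + 1 + x)⁻¹ := by funext x; simp [ph]
    rw [e]
    refine this.congr_deriv ?_
    simp
    ring
  · rw [u01]
    refine ContinuousOn.neg (ContinuousOn.div (by fun_prop) (by fun_prop) ?_)
    intro x hx
    have := hx.1
    positivity
  · rw [u01]
    have hs : ph i '' Set.Icc 0 1 ⊆ Set.Ioc (0:ℝ) 1 := by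
      rintro _ ⟨x, hx, rfl⟩
      exact ph_memIoc i hx
    refine ContinuousOn.div (hg.mono hs) (by fun_prop) ?_
    intro y hy
    have := (hs hy).1
    positivity

lemma int_div {g : ℝ → ℝ} (hg : ContinuousOn g (Set.Ioc 0 1)) {a b : ℝ}
    (ha : a ∈ Set.Ioc (0:ℝ) 1) (hb : b ∈ Set.Ioc (0:ℝ) 1) :
    IntervalIntegrable (fun y => g y / (1 + y)) volume a b := by
  apply ContinuousOn.intervalIntegrable
  have hs : Set.uIcc a b ⊆ Set.Ioc (0:ℝ) 1 := by
    intro y hy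
    rw [Set.mem_uIcc] at hy
    rcases hy with hy | hy
    · exact ⟨ha.1.trans_le hy.1, hy.2.trans hb.2⟩
    · exact ⟨hb.1.trans_le hy.1, hy.2.trans ha.2⟩
  refine ContinuousOn.div (hg.mono hs) (by fun_prop) ?_
  intro y hy
  have := (hs hy).1
  positivity

lemma inv_mem (n : ℕ) : 1 / ((n:ℝ)+1) ∈ Set.Ioc (0:ℝ) 1 := by
  refine ⟨by positivity, ?_⟩
  rw [div_le_one (by positivity)]
  have : (0:ℝ) ≤ n := by positivity
  linarith

lemma cov_sum (N : ℕ) {g : ℝ → ℝ} (hg : ContinuousOn g (Set.Ioc 0 1)) :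
    ∑ i ∈ Finset.range N, ∫ x in (0:ℝ)..1, pp i x * g (ph i x) / (1 + x)
      = ∫ y in (1 / ((N:ℝ)+1))..1, g y / (1 + y) := by
  induction N with
  | zero => simp
  | succ N ih =>
    rw [Finset.sum_range_succ, ih, cov N hg, add_comm]
    have h2 := inv_mem (N+1)
    have e : ((N+1:ℕ):ℝ) + 1 = (N:ℝ) + 2 := by push_cast; ring
    rw [e] at h2 ⊢
    exact intervalIntegral.integral_add_adjacent_intervals
      (int_div hg h2 (inv_mem N)) (int_div hg (inv_mem N) ⟨by norm_num, le_refl _⟩)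

lemma JJ_MM (B : ℕ) {g : ℝ → ℝ} (hg : ContinuousOn g (Set.Ioc 0 1)) :
    JJ (MM B g) = (∫ y in (1 / ((B:ℝ)+2))..1, g y / (1 + y))
      + ∫ x in (0:ℝ)..1, g (ph B x) / ((B:ℝ) + 2 + x) := by
  have h1 := cov_sum (B+1) hg
  have e : ((B+1:ℕ):ℝ) + 1 = (B:ℝ) + 2 := by push_cast; ring
  rw [e] at h1
  rw [← h1, ← intervalIntegral.integral_finsetSum, ← intervalIntegral.integral_add]
  · unfold JJ
    refine intervalIntegral.integral_congr fun x hx => ?_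
    rw [u01] at hx
    have hx0 := hx.1
    have a3 : 1 + x ≠ 0 := by positivity
    have a2 : (B:ℝ) + 2 + x ≠ 0 := by positivity
    have a5 : tt (B+1) x = (1 + x) / ((B:ℝ) + 2 + x) := by
      unfold tt; push_cast; congr 1; ring
    simp only [MM]
    rw [Wt_eq B _ hx, add_div, Finset.sum_div, a5]
    congr 1
    field_simp
  · apply ContinuousOn.intervalIntegrable
    rw [u01]
    exact continuousOn_finsetSum _ fun i _ => cont_pp i hg
  · apply ContinuousOn.intervalIntegrable
    rw [u01]
    refine ContinuousOn.div (hg.comp (ph_cont B) (fun x hx => ph_memIoc B hx)) (by fun_prop) ?_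
    intro x hx
    have := hx.1
    positivity
  · intro i _
    apply ContinuousOn.intervalIntegrable
    rw [u01]
    exact cont_pp i hg

lemma LipK.cont {K : ℝ} {g : ℝ → ℝ} (h : LipK K g) : ContinuousOn g (Set.Icc 0 1) := by
  have : LipschitzOnWith (Real.toNNReal K) g (Set.Icc 0 1) := by
    apply LipschitzOnWith.of_dist_le_mul
    intro x hx y hy
    rw [Real.dist_eq, Real.dist_eq]
    refine (h x hx y hy).trans ?_
    gcongr
    exact Real.le_coe_toNNReal K
  exact this.continuousOn

lemma norm_int_le {f : ℝ → ℝ} {a b C : ℝ} (hab : a ≤ b) (h : ∀ x ∈ Set.Icc a b, |f x| ≤ C) :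
    |∫ x in a..b, f x| ≤ C * (b - a) := by
  have := intervalIntegral.norm_integral_le_of_norm_le_const (a := a) (b := b) (C := C) (f := f) ?_
  · rwa [Real.norm_eq_abs, abs_of_nonneg (sub_nonneg.2 hab)] at this
  · intro x hx
    rw [Set.uIoc_of_le hab] at hx
    exact h x ⟨hx.1.le, hx.2⟩

lemma int_J {g : ℝ → ℝ} (hg : ContinuousOn g (Set.Icc 0 1)) {a b : ℝ}
    (ha : a ∈ Set.Icc (0:ℝ) 1) (hb : b ∈ Set.Icc (0:ℝ) 1) :
    IntervalIntegrable (fun y => g y / (1 + y)) volume a b := by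
  apply ContinuousOn.intervalIntegrable
  have hs : Set.uIcc a b ⊆ Set.Icc (0:ℝ) 1 := by
    rw [← u01] at ha hb ⊢
    exact Set.uIcc_subset_uIcc ha hb
  refine ContinuousOn.div (hg.mono hs) (by fun_prop) ?_
  intro y hy
  have := (hs hy).1
  positivity

lemma JJ_MM_sub (B : ℕ) {g : ℝ → ℝ} (hg : ContinuousOn g (Set.Icc 0 1)) {K : ℝ}
    (hK : ∀ x ∈ Set.Icc (0:ℝ) 1, |g x| ≤ K) : |JJ (MM B g) - JJ g| ≤ 2 * K / ((B:ℝ) + 2) := by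
  have hK0 : 0 ≤ K := (abs_nonneg _).trans (hK 0 ⟨le_refl _, by norm_num⟩)
  rw [JJ_MM B (hg.mono Set.Ioc_subset_Icc_self)]
  have hm : 1 / ((B:ℝ)+2) ∈ Set.Icc (0:ℝ) 1 := by
    have := inv_mem (B+1)
    have e : ((B+1:ℕ):ℝ) + 1 = (B:ℝ) + 2 := by push_cast; ring
    rw [e] at this
    exact ⟨this.1.le, this.2⟩
  have hz : (0:ℝ) ∈ Set.Icc (0:ℝ) 1 := ⟨le_refl _, by norm_num⟩
  have ho : (1:ℝ) ∈ Set.Icc (0:ℝ) 1 := ⟨by norm_num, le_refl _⟩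
  have hsplit := intervalIntegral.integral_add_adjacent_intervals (int_J hg hz hm) (int_J hg hm ho)
  have b1 : |∫ y in (0:ℝ)..(1 / ((B:ℝ)+2)), g y / (1 + y)| ≤ K * (1 / ((B:ℝ)+2) - 0) := by
    apply norm_int_le hm.1
    intro x hx
    have hx0 := hx.1
    rw [abs_div, abs_of_pos (by positivity : 0 < 1 + x)]
    refine (div_le_self (abs_nonneg _) (by linarith)).trans (hK x ⟨hx.1, hx.2.trans hm.2⟩)
  have b2 : |∫ x in (0:ℝ)..1, g (ph B x) / ((B:ℝ) + 2 + x)| ≤ K / ((B:ℝ)+2) * (1 - 0) := by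
    apply norm_int_le (by norm_num)
    intro x hx
    have hx0 := hx.1
    rw [abs_div, abs_of_pos (by positivity : 0 < (B:ℝ) + 2 + x)]
    exact div_le_div₀ hK0 (hK _ (ph_mem B hx)) (by positivity) (by linarith)
  unfold JJ
  rw [← hsplit]
  have e : 2 * K / ((B:ℝ) + 2) = K * (1 / ((B:ℝ)+2) - 0) + K / ((B:ℝ)+2) * (1 - 0) := by ring
  rw [e]
  rw [abs_le] at *
  constructor <;> linarith [b1.1, b1.2, b2.1, b2.2]

lemma ML_eq (B : ℕ) : ML B = MM B (fun y => - Real.log y) := by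
  funext x
  simp only [ML, MM, ph, one_div, Real.log_inv, neg_neg]

lemma log_div_tendsto : Tendsto (fun B : ℕ => Real.log ((B:ℝ)+2) / ((B:ℝ)+2)) atTop (nhds 0) := by
  have h1 : Tendsto (fun x : ℝ => Real.log x / x) atTop (nhds 0) := by
    have := Real.isLittleO_log_id_atTop.tendsto_div_nhds_zero
    simpa using this
  have h2 : Tendsto (fun B : ℕ => (B:ℝ) + 2) atTop atTop :=
    tendsto_atTop_add_const_right _ _ tendsto_natCast_atTop_atTop
  exact h1.comp h2

lemma JJ_ML : Tendsto (fun B : ℕ => JJ (ML B)) atTop (nhds (Real.pi^2/12)) := by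
  have hc : ContinuousOn (fun y : ℝ => - Real.log y) (Set.Ioc 0 1) := by
    refine ContinuousOn.neg (Real.continuousOn_log.mono ?_)
    intro x hx
    exact hx.1.ne'
  have h1 : Tendsto (fun B : ℕ => ∫ y in (1 / ((B:ℝ)+2))..1, -Real.log y / (1 + y))
    atTop (nhds (Real.pi^2/12)) := by
    have := tendsto_log_int.comp (tendsto_add_atTop_nat 1)
    refine this.congr fun B => ?_
    have e : ((B+1:ℕ):ℝ) + 1 = (B:ℝ) + 2 := by push_cast; ring
    simp only [Function.comp, e]
  have h2 : Tendsto (fun B : ℕ => ∫ x in (0:ℝ)..1, - Real.log (ph B x) / ((B:ℝ) + 2 + x))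
      atTop (nhds 0) := by
    refine squeeze_zero_norm (fun B => ?_) log_div_tendsto
    have := norm_int_le (f := fun x => - Real.log (ph B x) / ((B:ℝ) + 2 + x)) (a := 0) (b := 1)
      (C := Real.log ((B:ℝ)+2) / ((B:ℝ)+2)) (by norm_num) ?_
    · simpa using this
    · intro x hx
      have hx0 := hx.1
      have hx1 := hx.2
      have hB : (0:ℝ) ≤ B := by positivity
      have e : - Real.log (ph B x) = Real.log ((B:ℝ)+1+x) := by simp [ph]
      rw [e, abs_div, abs_of_pos (by positivity : 0 < (B:ℝ) + 2 + x),
        abs_of_nonneg (Real.log_nonneg (by linarith))]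
      exact div_le_div₀ (Real.log_nonneg (by linarith))
        (Real.log_le_log (by positivity) (by linarith)) (by positivity) (by linarith)
  have := h1.add h2
  rw [add_zero] at this
  refine this.congr fun B => ?_
  rw [ML_eq, JJ_MM B hc]

open Filter MeasureTheory

noncomputable def qq (B : ℕ) (c x : ℝ) : ℝ := 2 * c * ML B x - (1 + x)

lemma qq_bound (B : ℕ) {c : ℝ} (hc : 0 ≤ c) {x : ℝ} (hx : x ∈ Set.Icc (0:ℝ) 1) :
    |qq B c x| ≤ 6 * c + 2 := by
  have h1 := abs_le.1 (ML_bound B hx)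
  have h0 := hx.1
  have h2 := hx.2
  unfold qq
  rw [abs_le]
  constructor <;> nlinarith [h1.1, h1.2]

lemma qq_lip (B : ℕ) {c : ℝ} (hc : 0 ≤ c) : LipK (4 * c + 1) (qq B c) := by
  intro x hx y hy
  have h := ML_lip B x hx y hy
  have e : qq B c x - qq B c y = 2 * c * (ML B x - ML B y) - (x - y) := by unfold qq; ring
  rw [e]
  refine (abs_sub _ _).trans ?_
  rw [abs_mul, abs_of_nonneg (by positivity : 0 ≤ 2 * c)]
  have := mul_le_mul_of_nonneg_left h (by positivity : 0 ≤ 2 * c)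
  linarith

lemma m01 : (0:ℝ) ∈ Set.Icc (0:ℝ) 1 := ⟨le_refl _, by norm_num⟩
lemma m11 : (1:ℝ) ∈ Set.Icc (0:ℝ) 1 := ⟨by norm_num, le_refl _⟩

lemma JJ_qq (B : ℕ) (c : ℝ) : JJ (qq B c) = 2 * c * JJ (ML B) - 1 := by
  unfold JJ
  have h1 := int_J (ML_lip B).cont m01 m11
  have e : ∫ x in (0:ℝ)..1, qq B c x / (1 + x)
      = ∫ x in (0:ℝ)..1, (2 * c * (ML B x / (1 + x)) - 1) := by
    refine intervalIntegral.integral_congr fun x hx => ?_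
    rw [u01] at hx
    have := hx.1
    have a3 : 1 + x ≠ 0 := by positivity
    simp only [qq]
    field_simp
  rw [e, intervalIntegral.integral_sub (h1.const_mul _) (by simp),
    intervalIntegral.integral_const_mul]
  simp

lemma JJ_one : ∫ y in (0:ℝ)..1, 1 / (1 + y) = Real.log 2 := by
  have := intervalIntegral.integral_comp_add_left (a := 0) (b := 1) (fun y : ℝ => 1 / y) 1
  rw [this, integral_one_div_of_pos (by norm_num) (by norm_num)]
  norm_num

lemma avg {L : ℝ} {g : ℝ → ℝ} (hL : 0 ≤ L) (hg : LipK L g) {x : ℝ} (hx : x ∈ Set.Icc (0:ℝ) 1) :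
    |Real.log 2 * g x - JJ g| ≤ L := by
  have h1 := int_J hg.cont m01 m11
  have h2 : IntervalIntegrable (fun y : ℝ => 1 / (1 + y)) volume 0 1 :=
    int_J (g := fun _ => 1) (by fun_prop) m01 m11
  have e : Real.log 2 * g x - JJ g = ∫ y in (0:ℝ)..1, (g x * (1 / (1 + y)) - g y / (1 + y)) := by
    rw [intervalIntegral.integral_sub (h2.const_mul _) h1, intervalIntegral.integral_const_mul,
      JJ_one, JJ]
    ring
  rw [e]
  have := norm_int_le (f := fun y => g x * (1 / (1 + y)) - g y / (1 + y)) (a := 0) (b := 1)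
    (C := L) (by norm_num) ?_
  · simpa using this
  · intro y hy
    have hy0 := hy.1
    have e : g x * (1 / (1 + y)) - g y / (1 + y) = (g x - g y) / (1 + y) := by ring
    rw [e, abs_div, abs_of_pos (by positivity : 0 < 1 + y)]
    refine (div_le_self (abs_nonneg _) (by linarith)).trans ((hg x hx y hy).trans ?_)
    refine mul_le_of_le_one_right hL ?_
    rw [abs_le]
    constructor <;> linarith [hx.1, hx.2, hy.1, hy.2]

lemma MM_bound (B : ℕ) {g : ℝ → ℝ} {K : ℝ} (hK : ∀ x ∈ Set.Icc (0:ℝ) 1, |g x| ≤ K)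
    {x : ℝ} (hx : x ∈ Set.Icc (0:ℝ) 1) : |MM B g x| ≤ K := by
  have := Wt_abs B (c := fun i => g (ph i x)) (d := fun _ => K) (fun i => hK _ (ph_mem i hx)) hx
  rwa [Wt_const] at this

lemma iter_R {B : ℕ} (hB : 1 ≤ B) {g : ℝ → ℝ} {K L : ℝ} (hL : 0 ≤ L) (hg : LipK L g)
    (hK : ∀ x ∈ Set.Icc (0:ℝ) 1, |g x| ≤ K) (n : ℕ) :
    LipK ((7/8)^n * L) ((MM B)^[n] g) ∧ (∀ x ∈ Set.Icc (0:ℝ) 1, |(MM B)^[n] g x| ≤ K) ∧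
      |JJ ((MM B)^[n] g) - JJ g| ≤ n * (2 * K / ((B:ℝ) + 2)) := by
  induction n with
  | zero => exact ⟨by simpa using hg, hK, by simp⟩
  | succ n ih =>
    obtain ⟨i1, i2, i3⟩ := ih
    rw [Function.iterate_succ_apply']
    refine ⟨?_, fun x hx => MM_bound B i2 hx, ?_⟩
    · have := MM_contr hB (by positivity) i1
      rw [pow_succ']
      rwa [mul_assoc]
    · have := JJ_MM_sub B i1.cont i2
      push_cast
      have := abs_sub_le (JJ (MM B ((MM B)^[n] g))) (JJ ((MM B)^[n] g)) (JJ g)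
      linarith

noncomputable def uu (B : ℕ) (g : ℝ → ℝ) (n : ℕ) (x : ℝ) : ℝ :=
  ∑ k ∈ Finset.range n, (MM B)^[k] g x

lemma uu_eq (B : ℕ) (g : ℝ → ℝ) (n : ℕ) (x : ℝ) :
    g x + MM B (uu B g n) x - uu B g n x = (MM B)^[n] g x := by
  induction n with
  | zero =>
    have : MM B (uu B g 0) x = 0 := by
      have := Wt_const B 0 x
      simpa [MM, uu] using this
    rw [this]
    simp [uu]
  | succ n ih =>
    have h1 : MM B (uu B g (n+1)) x = MM B (uu B g n) x + (MM B)^[n+1] g x := by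
      rw [Function.iterate_succ_apply']
      simp only [MM]
      rw [← Wt_add]
      simp only [uu, Finset.sum_range_succ]
    have h2 : uu B g (n+1) x = uu B g n x + (MM B)^[n] g x := by
      simp only [uu, Finset.sum_range_succ]
    rw [h1, h2]
    linarith

lemma exists_u {c η : ℝ} (hc : 0 ≤ c) (hη : 0 < η) : ∃ K : ℝ, 0 ≤ K ∧ ∀ᶠ B : ℕ in atTop,
    ∃ u : ℝ → ℝ, (∀ x ∈ Set.Icc (0:ℝ) 1, |u x| ≤ K) ∧ ∀ x ∈ Set.Icc (0:ℝ) 1,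
      |Real.log 2 * (qq B c x + MM B u x - u x) - (c * Real.pi^2/6 - 1)| ≤ η := by
  have hn : ∃ n : ℕ, (7/8:ℝ)^n * (4 * c + 1) < η / 3 := by
    have h := (tendsto_pow_atTop_nhds_zero_of_lt_one (r := (7/8:ℝ)) (by norm_num)
      (by norm_num)).mul_const (4 * c + 1)
    rw [zero_mul] at h
    exact (h.eventually_lt_const (by positivity : 0 < η / 3)).exists
  obtain ⟨n, hn⟩ := hn
  refine ⟨n * (6 * c + 2), by positivity, ?_⟩
  have t1 : Tendsto (fun B : ℕ => (n:ℝ) * (2 * (6 * c + 2) / ((B:ℝ) + 2))) atTop (nhds 0) := by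
    have h2 : Tendsto (fun B : ℕ => (B:ℝ) + 2) atTop atTop :=
      tendsto_atTop_add_const_right _ _ tendsto_natCast_atTop_atTop
    have := (h2.const_div_atTop (2 * (6 * c + 2))).const_mul (n:ℝ)
    simpa using this
  have t2 : Tendsto (fun B : ℕ => JJ (qq B c)) atTop (nhds (c * Real.pi^2/6 - 1)) := by
    simp_rw [JJ_qq]
    have := (JJ_ML.const_mul (2 * c)).sub_const 1
    have e : 2 * c * (Real.pi^2/12) - 1 = c * Real.pi^2/6 - 1 := by ring
    rwa [e] at this
  have t3 := (tendsto_iff_norm_sub_tendsto_zero.1 t2).eventually_lt_const (by positivity : 0 < η / 3)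
  filter_upwards [t1.eventually_lt_const (by positivity : 0 < η / 3), t3, eventually_ge_atTop 1]
    with B b1 b2 b3
  rw [Real.norm_eq_abs] at b2
  refine ⟨uu B (qq B c) n, ?_, ?_⟩
  · intro x hx
    refine (Finset.abs_sum_le_sum_abs _ _).trans ?_
    refine (Finset.sum_le_card_nsmul _ _ (6 * c + 2) ?_).trans ?_
    · intro k _
      exact (iter_R b3 (by positivity) (qq_lip B hc) (fun x hx => qq_bound B hc hx) k).2.1 x hx
    · rw [Finset.card_range, nsmul_eq_mul]
  · intro x hx
    rw [uu_eq]
    obtain ⟨i1, i2, i3⟩ := iter_R b3 (by positivity) (qq_lip B hc)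
      (fun x hx => qq_bound B hc hx) n
    have h1 := avg (by positivity) i1 hx
    have h2 := abs_sub_le (Real.log 2 * (MM B)^[n] (qq B c) x) (JJ ((MM B)^[n] (qq B c)))
      (c * Real.pi^2/6 - 1)
    have h3 := abs_sub_le (JJ ((MM B)^[n] (qq B c))) (JJ (qq B c)) (c * Real.pi^2/6 - 1)
    linarith

open Filter MeasureTheory

noncomputable def ee (B : ℕ) (c : ℝ) (i : ℕ) (x : ℝ) : ℝ :=
  2 * c / ((B:ℝ)+1) * Real.log ((i:ℝ)+1+x)

noncomputable def SS (B : ℕ) (c : ℝ) (v : ℝ → ℝ) (x : ℝ) : ℝ :=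
  ∑ i ∈ Finset.range (B+1), pp i x * (Real.exp (ee B c i x) * v (ph i x))

lemma LL_eq (B : ℕ) (c : ℝ) (v : ℝ → ℝ) {x : ℝ} (hx : x ∈ Set.Icc (0:ℝ) 1) :
    (1 + x) * LL (B+1) (1 - c / ((B:ℝ)+1)) (fun y => v y / (1 + y)) x = SS B c v x := by
  have hx0 := hx.1
  unfold LL SS
  rw [Finset.mul_sum]
  symm
  refine Finset.sum_bij (fun i _ => (i:ℤ) + 1) ?_ ?_ ?_ ?_
  · intro i hi
    rw [Finset.mem_range] at hi
    rw [Finset.mem_Icc]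
    push_cast
    omega
  · intro a _ b _ h
    have : (a:ℤ) + 1 = b + 1 := h
    omega
  · intro a ha
    rw [Finset.mem_Icc] at ha
    push_cast at ha
    refine ⟨(a - 1).toNat, ?_, ?_⟩
    · rw [Finset.mem_range]; omega
    · omega
  · intro i _
    push_cast
    have hp : 0 < (i:ℝ) + 1 + x := by positivity
    have a2 : (i:ℝ) + 2 + x ≠ 0 := by positivity
    have a3 : 1 + x ≠ 0 := by positivity
    have hpow : ((i:ℝ) + 1 + x) ^ (-(2 * (1 - c / ((B:ℝ)+1))))
        = (((i:ℝ) + 1 + x)^2)⁻¹ * Real.exp (ee B c i x) := by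
      rw [Real.rpow_def_of_pos hp]
      have e : Real.log ((i:ℝ) + 1 + x) * (-(2 * (1 - c / ((B:ℝ)+1))))
        = - (2 * Real.log ((i:ℝ) + 1 + x)) + ee B c i x := by unfold ee; ring
      rw [e, Real.exp_add, Real.exp_neg]
      congr 2
      rw [two_mul, Real.exp_add, Real.exp_log hp]
      ring
    have a4 : 1 + 1 / ((i:ℝ) + 1 + x) = ((i:ℝ) + 2 + x) / ((i:ℝ) + 1 + x) := by
      field_simp; ring
    rw [hpow, a4]
    unfold pp ph
    field_simp

lemma pp_sum (B : ℕ) {x : ℝ} (hx : x ∈ Set.Icc (0:ℝ) 1) :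
    ∑ i ∈ Finset.range (B+1), pp i x = 1 - tt (B+1) x := by
  have h := Wt_eq B (fun _ => 1) hx
  rw [Wt_const] at h
  simp only [mul_one] at h
  linarith

lemma pp_sum_abs (B : ℕ) {x : ℝ} (hx : x ∈ Set.Icc (0:ℝ) 1) {d : ℕ → ℝ} {M : ℝ} (hM : 0 ≤ M)
    (hd : ∀ i ∈ Finset.range (B+1), |d i| ≤ M) :
    |∑ i ∈ Finset.range (B+1), pp i x * d i| ≤ M := by
  refine (Finset.abs_sum_le_sum_abs _ _).trans ?_
  have : ∑ i ∈ Finset.range (B+1), |pp i x * d i| ≤ ∑ i ∈ Finset.range (B+1), pp i x * M := by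
    refine Finset.sum_le_sum fun i hi => ?_
    rw [abs_mul, abs_of_nonneg (pp_nonneg i hx)]
    exact mul_le_mul_of_nonneg_left (hd i hi) (pp_nonneg i hx)
  refine this.trans ?_
  rw [← Finset.sum_mul, pp_sum B hx]
  have := tt_nonneg (B+1) hx
  nlinarith

lemma decomp (B : ℕ) (c : ℝ) (u : ℝ → ℝ) {x : ℝ} (hx : x ∈ Set.Icc (0:ℝ) 1) :
    ((B:ℝ)+1) * (SS B c (fun y => 1 + u y / ((B:ℝ)+1)) x - (1 + u x / ((B:ℝ)+1)))
      - (qq B c x + MM B u x - u x)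
    = ((B:ℝ)+1) * (∑ i ∈ Finset.range (B+1), pp i x * (Real.exp (ee B c i x) - 1 - ee B c i x))
      + ((1 + x) - ((B:ℝ)+1) * tt (B+1) x)
      + ∑ i ∈ Finset.range (B+1), pp i x * ((Real.exp (ee B c i x) - 1) * u (ph i x))
      - tt (B+1) x * (2 * c * Real.log ((B:ℝ)+1+x) + u (ph B x)) := by
  have hA : (B:ℝ) + 1 ≠ 0 := by positivity
  have h1 := pp_sum B hx
  unfold qq ML MM
  rw [Wt_eq B _ hx, Wt_eq B _ hx]
  have e1 : ((B:ℝ)+1) * SS B c (fun y => 1 + u y / ((B:ℝ)+1)) x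
      = ((B:ℝ)+1) * (∑ i ∈ Finset.range (B+1), pp i x * (Real.exp (ee B c i x) - 1 - ee B c i x))
       + ((B:ℝ)+1) * (∑ i ∈ Finset.range (B+1), pp i x)
       + 2 * c * (∑ i ∈ Finset.range (B+1), pp i x * Real.log ((i:ℝ)+1+x))
       + ∑ i ∈ Finset.range (B+1), pp i x * ((Real.exp (ee B c i x) - 1) * u (ph i x))
       + ∑ i ∈ Finset.range (B+1), pp i x * u (ph i x) := by
    unfold SS
    simp only [Finset.mul_sum, ← Finset.sum_add_distrib]
    refine Finset.sum_congr rfl fun i _ => ?_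
    unfold ee
    field_simp
    ring
  rw [mul_sub, e1, h1]
  field_simp
  ring

lemma err_bound (B : ℕ) {c K : ℝ} (hc : 0 ≤ c) (hK : 0 ≤ K) {u : ℝ → ℝ}
    (hu : ∀ x ∈ Set.Icc (0:ℝ) 1, |u x| ≤ K)
    (hl : 2 * c / ((B:ℝ)+1) * Real.log ((B:ℝ)+2) ≤ 1) {x : ℝ} (hx : x ∈ Set.Icc (0:ℝ) 1) :
    |((B:ℝ)+1) * (SS B c (fun y => 1 + u y / ((B:ℝ)+1)) x - (1 + u x / ((B:ℝ)+1)))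
      - (qq B c x + MM B u x - u x)|
    ≤ ((B:ℝ)+1) * (2 * c / ((B:ℝ)+1) * Real.log ((B:ℝ)+2))^2 + 4 / ((B:ℝ)+1)
      + 2 * (2 * c / ((B:ℝ)+1) * Real.log ((B:ℝ)+2)) * K
      + 2 / ((B:ℝ)+1) * (2 * c * Real.log ((B:ℝ)+2) + K) := by
  have hx0 := hx.1
  have hx1 := hx.2
  have hB : (0:ℝ) ≤ B := by positivity
  rw [decomp B c u hx]
  set lam := 2 * c / ((B:ℝ)+1) * Real.log ((B:ℝ)+2) with hlam
  have hlog : 0 ≤ Real.log ((B:ℝ)+2) := Real.log_nonneg (by linarith)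
  have hlam0 : 0 ≤ lam := by positivity
  have hee : ∀ i ∈ Finset.range (B+1), 0 ≤ ee B c i x ∧ ee B c i x ≤ lam := by
    intro i hi
    have hi' : (i:ℝ) ≤ B := by
      have := Finset.mem_range.1 hi
      exact_mod_cast Nat.lt_succ_iff.1 this
    have hi0 : (0:ℝ) ≤ i := by positivity
    have hl0 : 0 ≤ Real.log ((i:ℝ)+1+x) := Real.log_nonneg (by linarith)
    have hl1 : Real.log ((i:ℝ)+1+x) ≤ Real.log ((B:ℝ)+2) :=
      Real.log_le_log (by positivity) (by linarith)
    unfold ee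
    refine ⟨by positivity, ?_⟩
    rw [hlam]
    exact mul_le_mul_of_nonneg_left hl1 (by positivity)
  have habs : ∀ i ∈ Finset.range (B+1), |ee B c i x| ≤ 1 := by
    intro i hi
    rw [abs_of_nonneg (hee i hi).1]
    exact (hee i hi).2.trans hl
  have b1 : |∑ i ∈ Finset.range (B+1), pp i x * (Real.exp (ee B c i x) - 1 - ee B c i x)|
      ≤ lam^2 := by
    refine pp_sum_abs B hx (by positivity) fun i hi => ?_
    refine (Real.abs_exp_sub_one_sub_id_le (habs i hi)).trans ?_
    have := hee i hi
    exact pow_le_pow_left₀ this.1 this.2 2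
  have b3 : |∑ i ∈ Finset.range (B+1), pp i x * ((Real.exp (ee B c i x) - 1) * u (ph i x))|
      ≤ 2 * lam * K := by
    refine pp_sum_abs B hx (by positivity) fun i hi => ?_
    rw [abs_mul]
    have h1 := Real.abs_exp_sub_one_le (habs i hi)
    rw [abs_of_nonneg (hee i hi).1] at h1
    have h2 := (hee i hi).2
    exact mul_le_mul (by linarith) (hu _ (ph_mem i hx)) (abs_nonneg _) (by positivity)
  have et : tt (B+1) x = (1 + x) / ((B:ℝ) + 2 + x) := by
    unfold tt; push_cast; congr 1; ring
  have ht0 := tt_nonneg (B+1) hx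
  have ht : tt (B+1) x ≤ 2 / ((B:ℝ)+1) := by
    rw [et]
    exact div_le_div₀ (by norm_num) (by linarith) (by positivity) (by linarith)
  have b2 : |(1 + x) - ((B:ℝ)+1) * tt (B+1) x| ≤ 4 / ((B:ℝ)+1) := by
    have e : (1 + x) - ((B:ℝ)+1) * tt (B+1) x = (1 + x)^2 / ((B:ℝ) + 2 + x) := by
      rw [et]; field_simp; ring
    rw [e, abs_of_nonneg (by positivity)]
    exact div_le_div₀ (by norm_num) (by nlinarith) (by positivity) (by linarith)
  have b4 : |tt (B+1) x * (2 * c * Real.log ((B:ℝ)+1+x) + u (ph B x))|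
      ≤ 2 / ((B:ℝ)+1) * (2 * c * Real.log ((B:ℝ)+2) + K) := by
    rw [abs_mul, abs_of_nonneg ht0]
    refine mul_le_mul ht ?_ (abs_nonneg _) (by positivity)
    refine (abs_add_le _ _).trans (add_le_add ?_ (hu _ (ph_mem B hx)))
    have hl0 : 0 ≤ Real.log ((B:ℝ)+1+x) := Real.log_nonneg (by linarith)
    rw [abs_of_nonneg (by positivity)]
    exact mul_le_mul_of_nonneg_left (Real.log_le_log (by positivity) (by linarith)) (by positivity)
  have b1' : |((B:ℝ)+1) * ∑ i ∈ Finset.range (B+1), pp i x * (Real.exp (ee B c i x) - 1 - ee B c i x)|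
      ≤ ((B:ℝ)+1) * lam^2 := by
    rw [abs_mul, abs_of_pos (by positivity : 0 < (B:ℝ)+1)]
    exact mul_le_mul_of_nonneg_left b1 (by positivity)
  refine (abs_sub _ _).trans (add_le_add ?_ b4)
  refine (abs_add_le _ _).trans (add_le_add ?_ b3)
  exact (abs_add_le _ _).trans (add_le_add b1' b2)

lemma err_tendsto (c K : ℝ) : Tendsto (fun B : ℕ =>
    ((B:ℝ)+1) * (2 * c / ((B:ℝ)+1) * Real.log ((B:ℝ)+2))^2 + 4 / ((B:ℝ)+1)
      + 2 * (2 * c / ((B:ℝ)+1) * Real.log ((B:ℝ)+2)) * K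
      + 2 / ((B:ℝ)+1) * (2 * c * Real.log ((B:ℝ)+2) + K)) atTop (nhds 0) ∧
    Tendsto (fun B : ℕ => 2 * c / ((B:ℝ)+1) * Real.log ((B:ℝ)+2)) atTop (nhds 0) := by
  have h1 : Tendsto (fun B : ℕ => 1 / ((B:ℝ)+1)) atTop (nhds 0) :=
    tendsto_one_div_add_atTop_nhds_zero_nat
  have hT : Tendsto (fun B : ℕ => (B:ℝ) + 2) atTop atTop :=
    tendsto_atTop_add_const_right _ _ tendsto_natCast_atTop_atTop
  have h0 : Tendsto (fun B : ℕ => Real.log ((B:ℝ)+2)^2 / ((B:ℝ)+2)) atTop (nhds 0) := by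
    have := (Real.isLittleO_pow_log_id_atTop (n := 2)).tendsto_div_nhds_zero
    exact this.comp hT
  have hr : Tendsto (fun B : ℕ => 1 + 1 / ((B:ℝ)+1)) atTop (nhds 1) := by
    simpa using h1.const_add 1
  have h2 : Tendsto (fun B : ℕ => Real.log ((B:ℝ)+2) / ((B:ℝ)+1)) atTop (nhds 0) := by
    have := log_div_tendsto.mul hr
    rw [zero_mul] at this
    refine this.congr fun B => ?_
    field_simp
    ring
  have h3 : Tendsto (fun B : ℕ => Real.log ((B:ℝ)+2)^2 / ((B:ℝ)+1)) atTop (nhds 0) := by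
    have := h0.mul hr
    rw [zero_mul] at this
    refine this.congr fun B => ?_
    field_simp
    ring
  constructor
  · have := (((h3.const_mul (4 * c^2)).add (h1.const_mul (4 + 2 * K))).add
      (h2.const_mul (4 * c * K + 4 * c)))
    simp only [mul_zero, add_zero] at this
    refine this.congr fun B => ?_
    field_simp
    ring
  · have := h2.const_mul (2 * c)
    rw [mul_zero] at this
    refine this.congr fun B => ?_
    ring

lemma main_ev {c η : ℝ} (hc : 0 ≤ c) (hη : 0 < η) : ∀ᶠ B : ℕ in atTop,
    ∃ v : ℝ → ℝ, (∀ x ∈ Set.Icc (0:ℝ) 1, 1/2 ≤ v x ∧ v x ≤ 2) ∧ ∀ x ∈ Set.Icc (0:ℝ) 1,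
      |Real.log 2 * (((B:ℝ)+1) * (SS B c v x - v x)) - (c * Real.pi^2/6 - 1)| ≤ η := by
  obtain ⟨K, hK, hev⟩ := exists_u hc (half_pos hη)
  obtain ⟨e1, e2⟩ := err_tendsto c K
  have e3 : Tendsto (fun B : ℕ => K * (1 / ((B:ℝ)+1))) atTop (nhds 0) := by
    simpa using (tendsto_one_div_add_atTop_nhds_zero_nat (𝕜 := ℝ)).const_mul K
  filter_upwards [hev, e1.eventually_lt_const (half_pos hη), e2.eventually_lt_const one_pos,
    e3.eventually_lt_const (by norm_num : (0:ℝ) < 1/2)] with B ⟨u, hu, h⟩ b1 b2 b3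
  refine ⟨fun y => 1 + u y / ((B:ℝ)+1), ?_, ?_⟩
  · intro x hx
    have h1 : |u x / ((B:ℝ)+1)| ≤ 1/2 := by
      rw [abs_div, abs_of_pos (by positivity : 0 < (B:ℝ)+1)]
      refine le_trans ?_ b3.le
      rw [mul_one_div]
      have := hu x hx
      gcongr
    have := abs_le.1 h1
    constructor <;> linarith [this.1, this.2]
  · intro x hx
    have h1 := err_bound B hc hK hu b2.le hx
    have h2 := h x hx
    have hl0 : 0 < Real.log 2 := Real.log_pos (by norm_num)
    have hl1 : Real.log 2 ≤ 1 := by linarith [Real.log_two_lt_d9]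
    set X := ((B:ℝ)+1) * (SS B c (fun y => 1 + u y / ((B:ℝ)+1)) x - (1 + u x / ((B:ℝ)+1)))
    set Y := qq B c x + MM B u x - u x
    have h3 : |X - Y| ≤ η / 2 := h1.trans b1.le
    have h4 : |Real.log 2 * X - Real.log 2 * Y| ≤ η / 2 := by
      rw [← mul_sub, abs_mul, abs_of_pos hl0]
      nlinarith [abs_nonneg (X - Y)]
    have := abs_sub_le (Real.log 2 * X) (Real.log 2 * Y) (c * Real.pi^2/6 - 1)
    linarith

lemma upper_ev {c : ℝ} (hc : 0 ≤ c) (hc6 : c < 6 / Real.pi^2) : ∀ᶠ B : ℕ in atTop,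
    dimH (CA {a : ℤ | 1 ≤ a ∧ a ≤ ((B+1:ℕ) : ℤ)}) ≤ ENNReal.ofReal (1 - c / ((B:ℝ)+1)) := by
  have hpi : 0 < Real.pi^2 := by positivity
  have hk : c * Real.pi^2/6 - 1 < 0 := by
    rw [lt_div_iff₀ hpi] at hc6; linarith
  have e3 : Tendsto (fun B : ℕ => c * (1 / ((B:ℝ)+1))) atTop (nhds 0) := by
    simpa using (tendsto_one_div_add_atTop_nhds_zero_nat (𝕜 := ℝ)).const_mul c
  filter_upwards [main_ev hc (neg_pos.2 hk), e3.eventually_lt_const one_pos] with B ⟨v, hv, h⟩ b1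
  rw [mul_one_div] at b1
  refine dim_upper (by linarith) (f := fun y => v y / (1 + y)) (m := 1/4) (by norm_num) ?_ ?_
  · intro x hx
    have := (hv x hx).1
    have hx0 := hx.1
    have hx1 := hx.2
    rw [le_div_iff₀ (by positivity)]
    linarith
  · intro x hx
    have hx0 := hx.1
    rw [le_div_iff₀ (by positivity), mul_comm, LL_eq B c v hx]
    have h1 := (abs_le.1 (h x hx)).2
    have hl0 : 0 < Real.log 2 := Real.log_pos (by norm_num)
    by_contra hcon
    push Not at hcon
    have : 0 < Real.log 2 * (((B:ℝ)+1) * (SS B c v x - v x)) := by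
      have := sub_pos.2 hcon
      positivity
    linarith

lemma lower_ev {c : ℝ} (hc6 : 6 / Real.pi^2 < c) : ∀ᶠ B : ℕ in atTop,
    ENNReal.ofReal (1 - c / ((B:ℝ)+1)) ≤ dimH (CA {a : ℤ | 1 ≤ a ∧ a ≤ ((B+1:ℕ) : ℤ)}) := by
  have hpi : 0 < Real.pi^2 := by positivity
  have hc : 0 ≤ c := le_trans (by positivity) hc6.le
  have hk : 0 < c * Real.pi^2/6 - 1 := by
    rw [div_lt_iff₀ hpi] at hc6; linarith
  have e3 : Tendsto (fun B : ℕ => c * (1 / ((B:ℝ)+1))) atTop (nhds 0) := by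
    simpa using (tendsto_one_div_add_atTop_nhds_zero_nat (𝕜 := ℝ)).const_mul c
  filter_upwards [main_ev hc hk, e3.eventually_lt_const one_pos] with B ⟨v, hv, h⟩ b1
  rw [mul_one_div] at b1
  refine dim_lower (f := fun y => v y / (1 + y)) (m := 1/4) (M := 2)
    ⟨by norm_num, by linarith, ?_, by omega, ?_, ?_, ?_⟩
  · have : 0 ≤ c / ((B:ℝ)+1) := by positivity
    linarith
  · intro x hx
    have := (hv x hx).1
    have hx0 := hx.1
    have hx1 := hx.2
    rw [le_div_iff₀ (by positivity)]
    linarith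
  · intro x hx
    have := (hv x hx).2
    have hx0 := hx.1
    rw [div_le_iff₀ (by positivity)]
    linarith
  · intro x hx
    have hx0 := hx.1
    rw [div_le_iff₀ (by positivity), mul_comm, LL_eq B c v hx]
    have h1 := (abs_le.1 (h x hx)).1
    have hl0 : 0 < Real.log 2 := Real.log_pos (by norm_num)
    by_contra hcon
    push Not at hcon
    have : 0 < Real.log 2 * (((B:ℝ)+1) * (v x - SS B c v x)) := by
      have := sub_pos.2 hcon
      positivity
    linarith

theorem stmt6 :
    Tendsto
      (fun A : ℕ =>
        (A : ℝ) * (1 - (dimH (CA {a : ℤ | 1 ≤ a ∧ a ≤ (A : ℤ)})).toReal))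
      atTop (nhds (6 / Real.pi ^ 2)) := by
  rw [← tendsto_add_atTop_iff_nat 1]
  rw [tendsto_order]
  have hpi : 0 < 6 / Real.pi^2 := by positivity
  constructor
  · intro b hb
    obtain ⟨c, hc, hc6⟩ := exists_between (max_lt hb hpi)
    have hc0 : 0 ≤ c := (le_max_right _ _).trans hc.le
    have hbc : b < c := (le_max_left _ _).trans_lt hc
    have e3 : Tendsto (fun B : ℕ => c * (1 / ((B:ℝ)+1))) atTop (nhds 0) := by
      simpa using (tendsto_one_div_add_atTop_nhds_zero_nat (𝕜 := ℝ)).const_mul c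
    filter_upwards [upper_ev hc0 hc6, e3.eventually_lt_const one_pos] with B hB b1
    rw [mul_one_div] at b1
    have h1 := ENNReal.toReal_mono ENNReal.ofReal_ne_top hB
    rw [ENNReal.toReal_ofReal (by linarith)] at h1
    set d := (dimH (CA {a : ℤ | 1 ≤ a ∧ a ≤ ((B+1:ℕ) : ℤ)})).toReal
    have hA : 0 < (B:ℝ) + 1 := by positivity
    push_cast
    have h2 : c / ((B:ℝ)+1) ≤ 1 - d := by linarith
    rw [div_le_iff₀ hA] at h2
    linarith
  · intro b hb
    obtain ⟨c, hc6, hcb⟩ := exists_between hb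
    have e3 : Tendsto (fun B : ℕ => c * (1 / ((B:ℝ)+1))) atTop (nhds 0) := by
      simpa using (tendsto_one_div_add_atTop_nhds_zero_nat (𝕜 := ℝ)).const_mul c
    filter_upwards [lower_ev hc6, e3.eventually_lt_const one_pos] with B hB b1
    rw [mul_one_div] at b1
    have hfin : dimH (CA {a : ℤ | 1 ≤ a ∧ a ≤ ((B+1:ℕ) : ℤ)}) ≠ ⊤ := by
      have : dimH (CA {a : ℤ | 1 ≤ a ∧ a ≤ ((B+1:ℕ) : ℤ)}) ≤ 1 := by
        rw [← Real.dimH_univ]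
        exact dimH_mono (Set.subset_univ _)
      exact ne_top_of_le_ne_top ENNReal.one_ne_top this
    have h1 := ENNReal.toReal_mono hfin hB
    rw [ENNReal.toReal_ofReal (by linarith)] at h1
    set d := (dimH (CA {a : ℤ | 1 ≤ a ∧ a ≤ ((B+1:ℕ) : ℤ)})).toReal
    have hA : 0 < (B:ℝ) + 1 := by positivity
    push_cast
    have h2 : 1 - d ≤ c / ((B:ℝ)+1) := by linarith
    rw [le_div_iff₀ hA] at h2
    linarith
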